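/- Uniformly for X ≥ 1 and α = (α₁, α₂, α₃) ∈ ℝ³ with |α₃| ≤ X^{−10/3}, one has Σ_{|x| ≤ X} e(α₁ x + α₂ x³ + α₃ x⁵) ≪ X / (1 + X⁵ |α₃|)^{1/10}, where the sum runs over integers x with |x| ≤ X and the implied constant is absolute. -/

import Mathlib

/-!
Let `α₃ > 0` and `γ = α₃ ^ (1 / 5)`. The bound is trivial unless `γ * X > 1`, and it then reads
`O (√(X / γ))`; the hypothesis on `α₃` becomes `γ ^ 3 * X ^ 2 ≤ 1`.

On a block `n / 2 < x ≤ n` one Weyl–van der Corput step with shifts `u` up to a small multiple of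
`1 / (γ ^ 2 * n)` replaces the phase by `φ (x + u) - φ x`, a quartic whose third difference no
longer involves the linear and cubic coefficients and has size `μ ≍ u * α₃ * n`. The condition
`γ ^ 3 * X ^ 2 ≤ 1` makes the block shorter than a small multiple of `μ ^ (-1 / 2)`. For such short
sums the bound `O (μ ^ (-1 / 3))` holds (`third_test`); averaged over `u` it gives `O (√(n / γ))`
for the block (`block_bound`), and the blocks obtained by repeated halving add up geometrically
(`initial_segment_bound`). The phase is odd, so the negative `x` contribute the complex conjugate,
and the case `α₃ < 0` follows by conjugating the whole sum.

For `third_test` put `μ = r ^ (-6)`, so that the length is at most a small multiple of `r ^ 3` and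
the second difference varies by less than `1 / (16 * r ^ 3)`. Dirichlet's theorem gives a fraction
`a / q` within `1 / (q * r ^ 2)` of the second difference at `0`, with `q ≤ r ^ 2`.

* If `r ≤ q`, difference once more with all shifts `t` up to about `r ^ 2 / 4`. The slope of the
  differenced phase stays close to `t * a / q`, so the correlation is bounded
  by the Kusmin–Landau inequality or, when `t * a` is very close to a multiple of `q`, by the
  second-derivative test; the residues `t * a` run evenly through the classes modulo `q`
  (`large_denominator`).
* If `q < r`, difference with shifts divisible by `q`, so that the rational part `a / q`
  contributes only integers to the slope and Kusmin–Landau applies to the remainder. When the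
  second difference comes close to `a / q`, the sum is first cut dyadically according to the
  distance from `a / q` (`small_denominator_far`, `small_denominator_near`).
-/

open Finset

noncomputable def e (θ : ℝ) : ℂ := Complex.exp (2 * Real.pi * Complex.I * θ)

/-! ### Exponentials, the Kusmin–Landau inequality and van der Corput differencing -/

lemma e_add (x y : ℝ) : e (x + y) = e x * e y := by
  unfold e; rw [← Complex.exp_add]; push_cast; ring_nf

lemma norm_e (x : ℝ) : ‖e x‖ = 1 := by
  unfold e
  rw [show (2 * Real.pi * Complex.I * x : ℂ) = ((2 * Real.pi * x : ℝ) : ℂ) * Complex.I by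
    push_cast; ring]
  exact Complex.norm_exp_ofReal_mul_I _

lemma conj_e (x : ℝ) : (starRingEnd ℂ) (e x) = e (-x) := by
  unfold e
  rw [← Complex.exp_conj]
  simp [map_ofNat]

lemma e_int (k : ℤ) : e (k : ℝ) = 1 := by
  unfold e
  rw [Complex.exp_eq_one_iff]
  exact ⟨k, by push_cast; ring⟩

lemma e_sub_int (x : ℝ) (k : ℤ) : e (x - k) = e x := by
  have h := e_add (x - k) k
  rw [e_int, mul_one, sub_add_cancel] at h
  exact h.symm

lemma norm_sum_e_le (φ : ℕ → ℝ) (n : ℕ) : ‖∑ j ∈ range n, e (φ j)‖ ≤ n := by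
  refine (norm_sum_le _ _).trans ?_
  simp [norm_e]

/-- The reciprocal of `e x - 1`, made explicit through the cotangent. -/
lemma e_sub_one_mul (x : ℝ) (hx : Real.sin (Real.pi * x) ≠ 0) :
    (e x - 1) * (-1 / 2 - Complex.I / 2 *
      ((Real.cos (Real.pi * x) / Real.sin (Real.pi * x) : ℝ) : ℂ)) = 1 := by
  have h1 : e x = Complex.exp ((Real.pi * x : ℝ) * Complex.I) ^ 2 := by
    unfold e
    rw [← Complex.exp_nat_mul]
    congr 1; push_cast; ring
  rw [Complex.exp_mul_I, ← Complex.ofReal_cos, ← Complex.ofReal_sin] at h1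
  rw [h1]
  set c := Real.cos (Real.pi * x)
  set s := Real.sin (Real.pi * x)
  have hcs : (c : ℂ) ^ 2 + (s : ℂ) ^ 2 = 1 := by
    have := Real.cos_sq_add_sin_sq (Real.pi * x)
    exact_mod_cast this
  have hs : (s : ℂ) ≠ 0 := by exact_mod_cast hx
  push_cast
  field_simp
  have hI : Complex.I ^ 2 = -1 := Complex.I_sq
  have hc : (c : ℂ) ^ 2 = 1 - (s : ℂ) ^ 2 := by linear_combination hcs
  ring_nf
  have hI3 : Complex.I ^ 3 = -Complex.I := by rw [pow_succ, hI]; ring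
  have hc3 : (c : ℂ) ^ 3 = c * (1 - (s : ℂ) ^ 2) := by rw [pow_succ, hc]; ring
  have hs3 : (s : ℂ) ^ 3 = s * s ^ 2 := by ring
  simp only [hI, hI3, hc3, hc]
  ring

lemma sin_pi_ge (x δ : ℝ) (h1 : δ ≤ x) (h2 : x ≤ 1 - δ) (hδ : 0 < δ) :
    2 * δ ≤ Real.sin (Real.pi * x) := by
  have hpi := Real.pi_pos
  rcases le_total x (1 / 2) with h | h
  · have := Real.mul_le_sin (x := Real.pi * x) (by nlinarith) (by nlinarith)
    have h3 : 2 / Real.pi * (Real.pi * x) = 2 * x := by field_simp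
    linarith
  · have := Real.mul_le_sin (x := Real.pi * (1 - x)) (by nlinarith) (by nlinarith)
    have h3 : 2 / Real.pi * (Real.pi * (1 - x)) = 2 * (1 - x) := by field_simp
    have h4 : Real.sin (Real.pi * (1 - x)) = Real.sin (Real.pi * x) := by
      rw [mul_sub, mul_one, Real.sin_pi_sub]
    linarith

/-- Kusmin–Landau inequality: if the increments of `ψ` are non-decreasing and stay at distance
at least `δ` from the integers, the exponential sum is at most `2 / δ`. -/
lemma kusmin_landau (ψ : ℕ → ℝ) (n : ℕ) (k : ℤ) (δ : ℝ) (hδ : 0 < δ)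
    (hmono : ∀ j, j + 1 < n → ψ (j + 1) - ψ j ≤ ψ (j + 2) - ψ (j + 1))
    (hlo : ∀ j < n, k + δ ≤ ψ (j + 1) - ψ j)
    (hhi : ∀ j < n, ψ (j + 1) - ψ j ≤ k + 1 - δ) :
    ‖∑ j ∈ range n, e (ψ j)‖ ≤ 2 / δ := by
  rcases Nat.eq_zero_or_pos n with rfl | hn
  · simp; positivity
  set θ : ℕ → ℝ := fun j => ψ (j + 1) - ψ j - k with hθ
  set c : ℕ → ℝ := fun j => Real.cos (Real.pi * θ j) / Real.sin (Real.pi * θ j) with hc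
  set w : ℕ → ℂ := fun j => -1 / 2 - Complex.I / 2 * ((c j : ℝ) : ℂ) with hw
  have hδ2 : δ ≤ 1 / 2 := by
    have := hlo 0 hn; have := hhi 0 hn; linarith
  have hsin : ∀ j < n, 2 * δ ≤ Real.sin (Real.pi * θ j) := fun j hj =>
    sin_pi_ge _ δ (by have := hlo j hj; simp only [hθ]; linarith)
      (by have := hhi j hj; simp only [hθ]; linarith) hδ
  have hcabs : ∀ j < n, |c j| ≤ 1 / (2 * δ) := by
    intro j hj
    have h1 := hsin j hj
    rw [hc]; simp only [abs_div]
    rw [abs_of_pos (lt_of_lt_of_le (by positivity) h1)]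
    exact div_le_div₀ zero_le_one (Real.abs_cos_le_one _) (by positivity) h1
  have hwn : ∀ j < n, ‖w j‖ ≤ 1 / (2 * δ) := by
    intro j hj
    have h1 : ‖w j‖ ≤ 1 / 2 + 1 / 2 * |c j| := by
      refine (norm_sub_le _ _).trans ?_
      simp [Complex.norm_real]
    have h2 := hcabs j hj
    have h3 : (1 : ℝ) ≤ 1 / (2 * δ) := by rw [le_div_iff₀ (by positivity)]; linarith
    linarith
  have hrec : ∀ j < n, (e (ψ (j + 1)) - e (ψ j)) * w j = e (ψ j) := by
    intro j hj
    have h1 := e_sub_one_mul (θ j) (by have := hsin j hj; intro h; linarith)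
    have h2 : e (ψ (j + 1)) = e (ψ j) * e (θ j) := by
      rw [← e_add, ← e_sub_int (ψ (j + 1)) k]
      congr 1; simp only [hθ]; ring
    rw [h2]
    calc _ = e (ψ j) * ((e (θ j) - 1) * w j) := by ring
      _ = e (ψ j) := by rw [h1, mul_one]
  have hcdec : ∀ j, j + 1 < n → c (j + 1) ≤ c j := by
    intro j hj
    have h1 := hsin j (by omega)
    have h2 := hsin (j + 1) hj
    have h1' : 0 < Real.sin (Real.pi * θ j) := by linarith
    have h2' : 0 < Real.sin (Real.pi * θ (j + 1)) := by linarith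
    simp only [hc]
    rw [div_le_div_iff₀ h2' h1']
    have h3 : 0 ≤ Real.sin (Real.pi * θ (j + 1) - Real.pi * θ j) := by
      have hm := hmono j hj
      have a1 := hlo j (by omega)
      have a2 := hhi (j + 1) hj
      apply Real.sin_nonneg_of_nonneg_of_le_pi
      · rw [← mul_sub]; apply mul_nonneg Real.pi_pos.le; simp only [hθ]; linarith
      · rw [← mul_sub]
        have : θ (j + 1) - θ j ≤ 1 := by simp only [hθ]; linarith
        nlinarith [Real.pi_pos]
    rw [Real.sin_sub] at h3
    linarith
  have key : ∀ m, m + 1 ≤ n → ‖∑ j ∈ range (m + 1), e (ψ j) - e (ψ (m + 1)) * w m‖ ≤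
      ‖w 0‖ + 1 / 2 * (c 0 - c m) := by
    intro m
    induction m with
    | zero =>
      intro h
      have h1 := hrec 0 hn
      have : ∑ j ∈ range (0 + 1), e (ψ j) - e (ψ (0 + 1)) * w 0 = - (e (ψ 0) * w 0) := by
        simp only [zero_add, sum_range_one] at h1 ⊢
        linear_combination -h1
      rw [this, norm_neg, norm_mul, norm_e]; simp
    | succ m ih =>
      intro h
      have h1 := hrec (m + 1) (by omega)
      have h2 := ih (by omega)
      have : ∑ j ∈ range (m + 1 + 1), e (ψ j) - e (ψ (m + 1 + 1)) * w (m + 1) =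
          (∑ j ∈ range (m + 1), e (ψ j) - e (ψ (m + 1)) * w m) +
            e (ψ (m + 1)) * (w m - w (m + 1)) := by
        rw [sum_range_succ]
        linear_combination -h1
      rw [this]
      refine (norm_add_le _ _).trans ?_
      have h3 : ‖w m - w (m + 1)‖ = 1 / 2 * (c m - c (m + 1)) := by
        have : w m - w (m + 1) = -(Complex.I / 2 * ((c m - c (m + 1) : ℝ) : ℂ)) := by
          simp only [hw]; push_cast; ring
        rw [this, norm_neg, norm_mul, Complex.norm_real, Real.norm_eq_abs,
          abs_of_nonneg (sub_nonneg.2 (hcdec m h))]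
        simp
      rw [norm_mul, norm_e, one_mul, h3]
      linarith
  obtain ⟨m, rfl⟩ : ∃ m, n = m + 1 := ⟨n - 1, by omega⟩
  have h1 := key m le_rfl
  have h2 : ‖∑ j ∈ range (m + 1), e (ψ j)‖ ≤
      ‖∑ j ∈ range (m + 1), e (ψ j) - e (ψ (m + 1)) * w m‖ + ‖e (ψ (m + 1)) * w m‖ := by
    have := norm_add_le (∑ j ∈ range (m + 1), e (ψ j) - e (ψ (m + 1)) * w m)
      (e (ψ (m + 1)) * w m)
    rwa [sub_add_cancel] at this
  rw [norm_mul, norm_e, one_mul] at h2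
  have h3 := hwn 0 hn
  have h4 := hwn m (by omega)
  have h5 := abs_le.1 (hcabs 0 hn)
  have h6 := abs_le.1 (hcabs m (by omega))
  have h7 : 2 / δ = 4 * (1 / (2 * δ)) := by field_simp; norm_num
  have h8 : 0 < 1 / (2 * δ) := by positivity
  rw [h7]
  linarith

/-- Van der Corput's inequality with shifts `q * t`, `t < T`. The correlations
appear without the Fejér weight `1 - t / T`. -/
lemma van_der_corput (z : ℕ → ℂ) (hz : ∀ j, ‖z j‖ = 1) (N q T : ℕ) (hT : 0 < T) :
    ‖∑ j ∈ range N, z j‖ ^ 2 * T ≤ (N + q * T) * (N + 2 * ∑ t ∈ Ico 1 T,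
      ‖∑ j ∈ range (N - q * t), z (j + q * t) * (starRingEnd ℂ) (z j)‖) := by
  set S := ∑ j ∈ range N, z j with hS
  set Cr : ℕ → ℝ := fun t =>
    ‖∑ j ∈ range (N - q * t), z (j + q * t) * (starRingEnd ℂ) (z j)‖ with hCr
  set F : ℕ → ℕ → ℂ := fun h n => if q * h ≤ n ∧ n < N + q * h then z (n - q * h) else 0 with hF
  set M := N + q * T with hM
  have hFs : ∀ h < T, ∑ n ∈ range M, F h n = S := by
    intro h hh
    have hle : q * h ≤ q * T := Nat.mul_le_mul_left _ hh.le
    simp only [hF]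
    rw [← sum_filter]
    have : (range M).filter (fun n => q * h ≤ n ∧ n < N + q * h) = Ico (q * h) (N + q * h) := by
      ext n; simp only [mem_filter, mem_range, mem_Ico]; omega
    rw [this, sum_Ico_eq_sum_range]
    simp [hS]
  have hcorr : ∀ h h', h ≤ h' → h' < T →
      ∑ n ∈ range M, F h n * (starRingEnd ℂ) (F h' n) =
        ∑ j ∈ range (N - q * (h' - h)), z (j + q * (h' - h)) * (starRingEnd ℂ) (z j) := by
    intro h h' hh hT'
    obtain ⟨d, rfl⟩ := Nat.exists_eq_add_of_le hh
    have hle : q * (h + d) ≤ q * T := Nat.mul_le_mul_left _ hT'.le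
    simp only [hF, Nat.add_sub_cancel_left]
    have hexp : q * (h + d) = q * h + q * d := by ring
    have h1 : ∀ n ∈ range M, (if q * h ≤ n ∧ n < N + q * h then z (n - q * h) else 0) *
        (starRingEnd ℂ) (if q * (h + d) ≤ n ∧ n < N + q * (h + d) then z (n - q * (h + d)) else 0)
        = if q * (h + d) ≤ n ∧ n < N + q * h then
            z (n - q * h) * (starRingEnd ℂ) (z (n - q * (h + d))) else 0 := by
      intro n _
      by_cases hA : q * h ≤ n ∧ n < N + q * h
      · by_cases hB : q * (h + d) ≤ n ∧ n < N + q * (h + d)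
        · rw [if_pos hA, if_pos hB, if_pos ⟨hB.1, hA.2⟩]
        · rw [if_pos hA, if_neg hB, if_neg (by omega)]; simp
      · rw [if_neg hA, zero_mul, if_neg (by omega)]
    rw [sum_congr rfl h1, ← sum_filter]
    have : (range M).filter (fun n => q * (h + d) ≤ n ∧ n < N + q * h) =
        Ico (q * (h + d)) (N + q * h) := by
      ext n; simp only [mem_filter, mem_range, mem_Ico]; omega
    rw [this, sum_Ico_eq_sum_range]
    have h2 : N + q * h - q * (h + d) = N - q * d := by omega
    rw [h2]
    refine sum_congr rfl fun j _ => ?_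
    congr 2
    · omega
    · congr 1; omega
  have hnorm : ∀ h < T, ∀ h' < T, ‖∑ n ∈ range M, F h n * (starRingEnd ℂ) (F h' n)‖ =
      Cr (max h h' - min h h') := by
    intro h hh h' hh'
    rcases le_total h h' with hle | hle
    · rw [hcorr h h' hle hh', max_eq_right hle, min_eq_left hle]
    · rw [max_eq_left hle, min_eq_right hle]
      simp only [hCr]
      rw [← hcorr h' h hle hh, ← Complex.norm_conj, map_sum]
      congr 1
      refine sum_congr rfl fun n _ => ?_
      rw [map_mul, Complex.conj_conj, mul_comm]
  have hC0 : Cr 0 ≤ N := by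
    simp only [hCr]
    refine (norm_sum_le _ _).trans ?_
    simp [hz]
  have hCnn : ∀ t, 0 ≤ Cr t := fun t => norm_nonneg _
  have hrow : ∀ h < T, ∑ h' ∈ range T, Cr (max h h' - min h h') ≤
      N + 2 * ∑ t ∈ Ico 1 T, Cr t := by
    intro h hh
    have hsplit : range T = (Ico 0 h ∪ {h}) ∪ Ico (h + 1) T := by
      ext x; simp only [mem_range, mem_union, mem_Ico, mem_singleton]; omega
    rw [hsplit, sum_union, sum_union]
    · have e1 : ∑ x ∈ Ico 0 h, Cr (max h x - min h x) ≤ ∑ t ∈ Ico 1 T, Cr t := by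
        have : ∑ x ∈ Ico 0 h, Cr (max h x - min h x) = ∑ t ∈ (Ico 0 h).image (fun x => h - x), Cr t := by
          rw [sum_image]
          · refine sum_congr rfl fun x hx => ?_
            rw [mem_Ico] at hx
            rw [max_eq_left (by omega), min_eq_right (by omega)]
          · intro a ha b hb hab
            simp only [coe_Ico, Set.mem_Ico] at ha hb hab
            omega
        rw [this]
        refine sum_le_sum_of_subset_of_nonneg ?_ fun _ _ _ => hCnn _
        intro t ht
        simp only [mem_image, mem_Ico] at ht ⊢
        omega
      have e2 : ∑ x ∈ Ico (h + 1) T, Cr (max h x - min h x) ≤ ∑ t ∈ Ico 1 T, Cr t := by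
        have : ∑ x ∈ Ico (h + 1) T, Cr (max h x - min h x) =
            ∑ t ∈ (Ico (h + 1) T).image (fun x => x - h), Cr t := by
          rw [sum_image]
          · refine sum_congr rfl fun x hx => ?_
            rw [mem_Ico] at hx
            rw [max_eq_right (by omega), min_eq_left (by omega)]
          · intro a ha b hb hab
            simp only [coe_Ico, Set.mem_Ico] at ha hb hab
            omega
        rw [this]
        refine sum_le_sum_of_subset_of_nonneg ?_ fun _ _ _ => hCnn _
        intro t ht
        simp only [mem_image, mem_Ico] at ht ⊢
        omega
      have e3 : ∑ x ∈ {h}, Cr (max h x - min h x) = Cr 0 := by simp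
      linarith
    · rw [disjoint_left]; intro a; simp only [mem_Ico, mem_singleton]; omega
    · rw [disjoint_left]; intro a; simp only [mem_union, mem_Ico, mem_singleton]; omega
  have hTS : (T : ℂ) * S = ∑ n ∈ range M, ∑ h ∈ range T, F h n := by
    rw [sum_comm, sum_congr rfl fun h hh => hFs h (mem_range.1 hh)]
    simp
  have hcs : (T : ℝ) ^ 2 * ‖S‖ ^ 2 ≤ M * ∑ n ∈ range M, ‖∑ h ∈ range T, F h n‖ ^ 2 := by
    have h1 : (T : ℝ) * ‖S‖ ≤ ∑ n ∈ range M, ‖∑ h ∈ range T, F h n‖ := by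
      have := norm_sum_le (range M) (fun n => ∑ h ∈ range T, F h n)
      rw [← hTS, norm_mul] at this
      simpa using this
    have h2 := sq_sum_le_card_mul_sum_sq (s := range M) (f := fun n => ‖∑ h ∈ range T, F h n‖)
    rw [card_range] at h2
    calc (T : ℝ) ^ 2 * ‖S‖ ^ 2 = (T * ‖S‖) ^ 2 := by ring
      _ ≤ (∑ n ∈ range M, ‖∑ h ∈ range T, F h n‖) ^ 2 := by gcongr
      _ ≤ _ := h2
  have hsq : ∑ n ∈ range M, ‖∑ h ∈ range T, F h n‖ ^ 2 ≤
      T * (N + 2 * ∑ t ∈ Ico 1 T, Cr t) := by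
    have h1 : ((∑ n ∈ range M, ‖∑ h ∈ range T, F h n‖ ^ 2 : ℝ) : ℂ) =
        ∑ h ∈ range T, ∑ h' ∈ range T, ∑ n ∈ range M, F h n * (starRingEnd ℂ) (F h' n) := by
      push_cast
      have : ∀ n ∈ range M, ((‖∑ h ∈ range T, F h n‖ : ℝ) : ℂ) ^ 2 =
          ∑ h ∈ range T, ∑ h' ∈ range T, F h n * (starRingEnd ℂ) (F h' n) := by
        intro n _
        rw [← Complex.mul_conj', map_sum, sum_mul_sum]
      rw [sum_congr rfl this, sum_comm]
      refine sum_congr rfl fun h _ => ?_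
      rw [sum_comm]
    have h2 : ∑ n ∈ range M, ‖∑ h ∈ range T, F h n‖ ^ 2 =
        ‖((∑ n ∈ range M, ‖∑ h ∈ range T, F h n‖ ^ 2 : ℝ) : ℂ)‖ := by
      rw [Complex.norm_real, Real.norm_eq_abs, abs_of_nonneg]
      exact sum_nonneg fun _ _ => by positivity
    rw [h2, h1]
    refine (norm_sum_le _ _).trans ?_
    have h3 : ∀ h ∈ range T, ‖∑ h' ∈ range T, ∑ n ∈ range M, F h n * (starRingEnd ℂ) (F h' n)‖ ≤
        N + 2 * ∑ t ∈ Ico 1 T, Cr t := by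
      intro h hh
      rw [mem_range] at hh
      refine (norm_sum_le _ _).trans ?_
      rw [sum_congr rfl fun h' hh' => hnorm h hh h' (mem_range.1 hh')]
      exact hrow h hh
    refine (sum_le_sum h3).trans ?_
    rw [sum_const, card_range, nsmul_eq_mul]
  have hTpos : (0 : ℝ) < T := by exact_mod_cast hT
  have hMr : (M : ℝ) = N + q * T := by simp [hM]
  rw [← hMr]
  have : (T : ℝ) * (‖S‖ ^ 2 * T) ≤ T * (M * (N + 2 * ∑ t ∈ Ico 1 T, Cr t)) := by
    calc (T : ℝ) * (‖S‖ ^ 2 * T) = T ^ 2 * ‖S‖ ^ 2 := by ring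
      _ ≤ _ := hcs
      _ ≤ M * (T * (N + 2 * ∑ t ∈ Ico 1 T, Cr t)) := by gcongr
      _ = _ := by ring
  exact le_of_mul_le_mul_left this hTpos

/-! ### Power sums, thresholds and the second-derivative test -/

/-- Comparison of a power sum with the integral. -/
lemma sum_rpow_neg_le (p : ℝ) (hp0 : 0 ≤ p) (hp1 : p < 1) (T : ℕ) :
    ∑ t ∈ range T, ((t + 1 : ℕ) : ℝ) ^ (-p) ≤ (T : ℝ) ^ (1 - p) / (1 - p) := by
  have hp : 0 < 1 - p := by linarith
  induction T with
  | zero => simp; positivity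
  | succ n ih =>
    rw [sum_range_succ]
    have hn : (0 : ℝ) < ((n + 1 : ℕ) : ℝ) := by positivity
    set x : ℝ := ((n + 1 : ℕ) : ℝ) with hx
    have hnx : (n : ℝ) = x - 1 := by rw [hx]; push_cast; ring
    have hx1 : 1 ≤ x := by rw [hx]; push_cast; linarith [Nat.cast_nonneg (α := ℝ) n]
    have h1 := rpow_one_add_le_one_add_mul_self (s := -(1 / x))
      (by rw [neg_le_neg_iff, div_le_one hn]; exact hx1) hp.le (by linarith)
    have h2 : (n : ℝ) ^ (1 - p) = x ^ (1 - p) * (1 + -(1 / x)) ^ (1 - p) := by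
      rw [← Real.mul_rpow hn.le]
      · congr 1; rw [hnx]; field_simp; ring
      · have : 1 / x ≤ 1 := by rw [div_le_one hn]; exact hx1
        linarith
    have h3 : x ^ (-p) = x ^ (1 - p) * (1 / x) := by
      rw [show -p = (1 - p) - 1 by ring, Real.rpow_sub_one hn.ne']; ring
    have h4 : (n : ℝ) ^ (1 - p) ≤ x ^ (1 - p) * (1 + (1 - p) * -(1 / x)) := by
      rw [h2]; gcongr
    have h5 : (n : ℝ) ^ (1 - p) / (1 - p) + x ^ (-p) ≤ x ^ (1 - p) / (1 - p) := by
      rw [div_add' _ _ _ hp.ne', div_le_div_iff_of_pos_right hp, h3]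
      linarith
    linarith

lemma sum_Ico_rpow_neg_le (p : ℝ) (hp0 : 0 ≤ p) (hp1 : p < 1) (T : ℕ) :
    ∑ t ∈ Ico 1 T, (t : ℝ) ^ (-p) ≤ (T : ℝ) ^ (1 - p) / (1 - p) := by
  rw [sum_Ico_eq_sum_range]
  refine le_trans ?_ (sum_rpow_neg_le p hp0 hp1 T)
  have : ∀ t, ((1 + t : ℕ) : ℝ) ^ (-p) = ((t + 1 : ℕ) : ℝ) ^ (-p) := fun t => by rw [add_comm]
  simp only [this]
  refine sum_le_sum_of_subset_of_nonneg ?_ fun _ _ _ => by positivity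
  exact range_subset_range.2 (by omega)

/-- A sequence that is non-decreasing on `[0, n)` passes the level `c` once. -/
lemma exists_threshold (θ : ℕ → ℝ) (n : ℕ) (hmono : ∀ j, j + 1 < n → θ j ≤ θ (j + 1)) (c : ℝ) :
    ∃ m ≤ n, (∀ j < m, θ j ≤ c) ∧ ∀ j, m ≤ j → j < n → c < θ j := by
  induction n with
  | zero => exact ⟨0, le_rfl, by simp, by simp⟩
  | succ n ih =>
    obtain ⟨m, hm, h1, h2⟩ := ih fun j hj => hmono j (by omega)
    rcases Nat.lt_or_ge m n with hlt | hge
    · refine ⟨m, by omega, h1, fun j hj hjn => ?_⟩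
      rcases Nat.lt_or_ge j n with h | h
      · exact h2 j hj h
      · have hjn' : j = (n - 1) + 1 := by omega
        have := h2 (n - 1) (by omega) (by omega)
        have h3 := hmono (n - 1) (by omega)
        rw [hjn']; linarith
    · have : m = n := by omega
      subst this
      by_cases hc : θ m ≤ c
      · refine ⟨m + 1, le_rfl, fun j hj => ?_, fun j h h' => by omega⟩
        rcases Nat.lt_or_ge j m with h | h
        · exact h1 j h
        · rw [show j = m by omega]; exact hc
      · refine ⟨m, by omega, h1, fun j h h' => ?_⟩
        rw [show j = m by omega]; exact lt_of_not_ge hc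

lemma le_of_increments (θ : ℕ → ℝ) (n : ℕ) (L : ℝ) (h : ∀ j, j + 1 < n → θ j + L ≤ θ (j + 1))
    (i d : ℕ) (hd : i + d < n) : θ i + d * L ≤ θ (i + d) := by
  induction d with
  | zero => simp
  | succ d ih =>
    have h1 := ih (by omega)
    have h2 := h (i + d) (by omega)
    rw [← add_assoc]; push_cast; linarith

lemma ge_of_increments (θ : ℕ → ℝ) (n : ℕ) (L : ℝ) (h : ∀ j, j + 1 < n → θ (j + 1) ≤ θ j + L)
    (i d : ℕ) (hd : i + d < n) : θ (i + d) ≤ θ i + d * L := by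
  induction d with
  | zero => simp
  | succ d ih =>
    have h1 := ih (by omega)
    have h2 := h (i + d) (by omega)
    rw [← add_assoc]; push_cast; linarith

lemma sum_Ico_shift (f : ℕ → ℂ) (m n : ℕ) :
    ∑ j ∈ Ico m n, f j = ∑ j ∈ range (n - m), f (m + j) := sum_Ico_eq_sum_range f m n

lemma kusmin_landau_Ico (ψ : ℕ → ℝ) (m n : ℕ) (k : ℤ) (δ : ℝ) (hδ : 0 < δ)
    (hmono : ∀ j, m ≤ j → j + 1 < n → ψ (j + 1) - ψ j ≤ ψ (j + 2) - ψ (j + 1))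
    (hlo : ∀ j, m ≤ j → j < n → k + δ ≤ ψ (j + 1) - ψ j)
    (hhi : ∀ j, m ≤ j → j < n → ψ (j + 1) - ψ j ≤ k + 1 - δ) :
    ‖∑ j ∈ Ico m n, e (ψ j)‖ ≤ 2 / δ := by
  rw [sum_Ico_shift (fun j => e (ψ j))]
  exact kusmin_landau (fun j => ψ (m + j)) (n - m) k δ hδ
    (fun j hj => hmono (m + j) (by omega) (by omega))
    (fun j hj => hlo (m + j) (by omega) (by omega))
    (fun j hj => hhi (m + j) (by omega) (by omega))

/-- Second-derivative test in the case where the derivative varies by at most `1 / 4`, so that it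
meets the neighbourhood of at most one integer. -/
lemma second_test (ψ : ℕ → ℝ) (n : ℕ) (L : ℝ) (hL0 : 0 < L) (hL1 : L ≤ 1)
    (hinc : ∀ j, j + 1 < n → ψ (j + 1) - ψ j + L ≤ ψ (j + 2) - ψ (j + 1))
    (hvar : ∀ j < n, ψ (j + 1) - ψ j ≤ ψ 1 - ψ 0 + 1 / 4) :
    ‖∑ j ∈ range n, e (ψ j)‖ ≤ 8 / √L := by
  set θ : ℕ → ℝ := fun j => ψ (j + 1) - ψ j with hθ
  have hs0 : 0 < √L := Real.sqrt_pos.2 hL0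
  have hsq : √L ^ 2 = L := Real.sq_sqrt hL0.le
  have hs1 : √L ≤ 1 := Real.sqrt_le_iff.2 ⟨by norm_num, by simpa using hL1⟩
  rcases Nat.eq_zero_or_pos n with rfl | hn
  · simp; positivity
  have hinc' : ∀ j, j + 1 < n → θ j + L ≤ θ (j + 1) := hinc
  by_cases hbig : 1 / 16 < L
  · have h1 := le_of_increments θ n L hinc' 0 (n - 1) (by omega)
    have h2 := hvar (n - 1) (by omega)
    have h3 : θ (0 + (n - 1)) ≤ θ 0 + 1 / 4 := by rw [zero_add]; exact h2
    have h4 : ((n - 1 : ℕ) : ℝ) = n - 1 := by rw [Nat.cast_sub hn]; simp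
    rw [h4] at h1
    have h5 : ((n : ℝ) - 1) * L ≤ 1 / 4 := by linarith
    have h6 : (n : ℝ) ≤ 8 / √L := by
      rw [le_div_iff₀ hs0]
      have : (n : ℝ) ≤ 5 := by nlinarith
      nlinarith
    exact (norm_sum_e_le ψ n).trans h6
  push Not at hbig
  set δ := √L with hδ
  have hδ4 : δ ≤ 1 / 4 := by
    rw [hδ, show (1 / 4 : ℝ) = √(1 / 16) by
      rw [show (1 / 16 : ℝ) = (1 / 4) ^ 2 by norm_num, Real.sqrt_sq (by norm_num)]]
    exact Real.sqrt_le_sqrt hbig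
  set k : ℤ := round (θ 0) with hk
  have hk1 := abs_le.1 (abs_sub_round (θ 0))
  rw [← hk] at hk1
  have hmono : ∀ j, j + 1 < n → θ j ≤ θ (j + 1) := fun j hj => by
    have := hinc' j hj; linarith
  have hge : ∀ j < n, θ 0 ≤ θ j := by
    intro j hj
    have := le_of_increments θ n 0 (fun j hj => by simpa using hmono j hj) 0 j (by omega)
    simpa using this
  have hle : ∀ j < n, θ j ≤ θ 0 + 1 / 4 := hvar
  obtain ⟨m₁, hm₁, a1, a2⟩ := exists_threshold θ n hmono (k - δ)
  obtain ⟨m₂, hm₂, b1, b2⟩ := exists_threshold θ n hmono (k + δ)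
  have hm : m₁ ≤ m₂ := by
    by_contra hcon
    push Not at hcon
    have h1 := a1 m₂ hcon
    have h2 := b2 m₂ le_rfl (by omega)
    linarith
  have hsplit : ∑ j ∈ range n, e (ψ j) =
      ∑ j ∈ Ico 0 m₁, e (ψ j) + ∑ j ∈ Ico m₁ m₂, e (ψ j) + ∑ j ∈ Ico m₂ n, e (ψ j) := by
    rw [sum_Ico_consecutive _ (Nat.zero_le _) hm, sum_Ico_consecutive _ (Nat.zero_le _) hm₂,
      range_eq_Ico]
  have s1 : ‖∑ j ∈ Ico 0 m₁, e (ψ j)‖ ≤ 2 / δ := by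
    refine kusmin_landau_Ico ψ 0 m₁ (k - 1) δ hs0 (fun j _ hj => hmono j (by omega)) ?_ ?_
    · intro j _ hj
      have := hge j (by omega)
      simp only [hθ] at this hk1
      push_cast; linarith
    · intro j _ hj
      have := a1 j hj
      simp only [hθ] at this
      push_cast; linarith
  have s3 : ‖∑ j ∈ Ico m₂ n, e (ψ j)‖ ≤ 2 / δ := by
    refine kusmin_landau_Ico ψ m₂ n k δ hs0 (fun j _ hj => hmono j (by omega)) ?_ ?_
    · intro j h hj
      have := b2 j h hj
      simp only [hθ] at this
      linarith
    · intro j _ hj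
      have := hle j hj
      simp only [hθ] at this hk1
      linarith
  have s2 : ‖∑ j ∈ Ico m₁ m₂, e (ψ j)‖ ≤ 3 / δ := by
    have h0 : ‖∑ j ∈ Ico m₁ m₂, e (ψ j)‖ ≤ ((m₂ - m₁ : ℕ) : ℝ) := by
      rw [sum_Ico_shift (fun j => e (ψ j))]
      exact norm_sum_e_le (fun j => ψ (m₁ + j)) (m₂ - m₁)
    refine h0.trans ?_
    rcases Nat.eq_zero_or_pos (m₂ - m₁) with h | h
    · rw [h]; simp; positivity
    · have h1 := le_of_increments θ n L hinc' m₁ (m₂ - m₁ - 1) (by omega)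
      have h2 := b1 (m₁ + (m₂ - m₁ - 1)) (by omega)
      have h3 := a2 m₁ le_rfl (by omega)
      have h4 : ((m₂ - m₁ - 1 : ℕ) : ℝ) = ((m₂ - m₁ : ℕ) : ℝ) - 1 := by
        rw [Nat.cast_sub h]; simp
      rw [h4] at h1
      have h5 : (((m₂ - m₁ : ℕ) : ℝ) - 1) * L ≤ 2 * δ := by linarith
      rw [← hsq] at h5
      rw [le_div_iff₀ hs0]
      have h6 : (((m₂ - m₁ : ℕ) : ℝ) - 1) * δ ≤ 2 := by
        by_contra hcon
        push Not at hcon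
        nlinarith
      linarith
  rw [hsplit]
  have t1 := norm_add_le (∑ j ∈ Ico 0 m₁, e (ψ j) + ∑ j ∈ Ico m₁ m₂, e (ψ j))
    (∑ j ∈ Ico m₂ n, e (ψ j))
  have t2 := norm_add_le (∑ j ∈ Ico 0 m₁, e (ψ j)) (∑ j ∈ Ico m₁ m₂, e (ψ j))
  have t3 : 8 / δ = 2 / δ + 3 / δ + 2 / δ + 1 / δ := by ring
  have t4 : 0 < 1 / δ := by positivity
  linarith

/-- Forward second difference of a sequence. -/
def secondDiff (φ : ℕ → ℝ) (j : ℕ) : ℝ := φ (j + 2) - 2 * φ (j + 1) + φ j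

/-- The slope of the differenced phase `φ (j + h) - φ j` is a sum of `h` second differences
of `φ`. -/
lemma diff_increment (φ : ℕ → ℝ) (h j : ℕ) :
    (φ (j + 1 + h) - φ (j + 1)) - (φ (j + h) - φ j) = ∑ i ∈ range h, secondDiff φ (j + i) := by
  induction h with
  | zero => simp
  | succ h ih =>
    rw [sum_range_succ, ← ih]
    unfold secondDiff
    rw [show j + 1 + (h + 1) = j + h + 2 by ring, show j + (h + 1) = j + h + 1 by ring,
      show j + 1 + h = j + h + 1 by ring]
    ring

lemma van_der_corput_phase (φ : ℕ → ℝ) (N q T : ℕ) (hT : 0 < T) :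
    ‖∑ j ∈ range N, e (φ j)‖ ^ 2 * T ≤ (N + q * T) * (N + 2 * ∑ t ∈ Ico 1 T,
      ‖∑ j ∈ range (N - q * t), e (φ (j + q * t) - φ j)‖) := by
  have := van_der_corput (fun j => e (φ j)) (fun j => norm_e _) N q T hT
  simpa only [conj_e, ← e_add, ← sub_eq_add_neg] using this

/-- Kusmin–Landau for a differenced phase whose second differences lie in `[lo, hi]`. -/
lemma diff_kusmin_landau (φ : ℕ → ℝ) (N h : ℕ) (lo hi δ : ℝ) (k : ℤ) (hδ : 0 < δ)
    (hmono : ∀ x, x + 1 < N → secondDiff φ x ≤ secondDiff φ (x + 1))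
    (hb : ∀ x < N, lo ≤ secondDiff φ x ∧ secondDiff φ x ≤ hi)
    (hlo : k + δ ≤ h * lo) (hhi : h * hi ≤ k + 1 - δ) :
    ‖∑ j ∈ range (N - h), e (φ (j + h) - φ j)‖ ≤ 2 / δ := by
  refine kusmin_landau (fun j => φ (j + h) - φ j) (N - h) k δ hδ ?_ ?_ ?_
  · intro j hj
    have h1 := diff_increment φ h j
    have h2 := diff_increment φ h (j + 1)
    rw [h1, show j + 2 = j + 1 + 1 by ring, h2]
    refine sum_le_sum fun i hi' => ?_
    rw [mem_range] at hi'
    have := hmono (j + i) (by omega)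
    rwa [show j + 1 + i = j + i + 1 by ring]
  · intro j hj
    rw [diff_increment φ h j]
    refine hlo.trans ?_
    rw [← nsmul_eq_mul]
    have := card_nsmul_le_sum (range h) (fun i => secondDiff φ (j + i)) lo
      (fun i hi' => (hb (j + i) (by rw [mem_range] at hi'; omega)).1)
    rwa [card_range] at this
  · intro j hj
    rw [diff_increment φ h j]
    refine le_trans ?_ hhi
    rw [← nsmul_eq_mul]
    have := sum_le_card_nsmul (range h) (fun i => secondDiff φ (j + i)) hi
      (fun i hi' => (hb (j + i) (by rw [mem_range] at hi'; omega)).2)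
    rwa [card_range] at this

/-- Second-derivative test for a differenced phase. -/
lemma diff_second_test (φ : ℕ → ℝ) (N h : ℕ) (μ V : ℝ) (hμ : 0 < μ) (hh : 0 < h)
    (hinc : ∀ x, x + 1 < N → secondDiff φ x + μ ≤ secondDiff φ (x + 1))
    (hV : ∀ x < N, ∀ x' < N, secondDiff φ x ≤ secondDiff φ x' + V)
    (h1 : h * μ ≤ 1) (h2 : h * V ≤ 1 / 4) :
    ‖∑ j ∈ range (N - h), e (φ (j + h) - φ j)‖ ≤ 8 / √(h * μ) := by
  have hh' : (0 : ℝ) < h := by exact_mod_cast hh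
  refine second_test (fun j => φ (j + h) - φ j) (N - h) (h * μ) (by positivity) h1 ?_ ?_
  · intro j hj
    rw [diff_increment φ h j, show j + 2 = j + 1 + 1 by ring, diff_increment φ h (j + 1)]
    have : (h : ℝ) * μ = ∑ _i ∈ range h, μ := by simp
    rw [this, ← sum_add_distrib]
    refine sum_le_sum fun i hi' => ?_
    rw [mem_range] at hi'
    have := hinc (j + i) (by omega)
    rwa [show j + 1 + i = j + i + 1 by ring]
  · intro j hj
    have e1 := diff_increment φ h j
    have e2 := diff_increment φ h 0
    simp only [zero_add] at e2 ⊢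
    rw [e1, e2]
    refine le_trans ?_ (add_le_add_right h2 _)
    have : (h : ℝ) * V = ∑ _i ∈ range h, V := by simp
    rw [this, ← sum_add_distrib]
    refine sum_le_sum fun i hi' => ?_
    rw [mem_range] at hi'
    exact hV (j + i) (by omega) i (by omega)

/-! ### Large denominators -/

lemma sum_range_zmod (q : ℕ) [NeZero q] (F : ZMod q → ℝ) :
    ∑ t ∈ range q, F (t : ZMod q) = ∑ z, F z := by
  refine sum_nbij' (fun t => (t : ZMod q)) ZMod.val ?_ ?_ ?_ ?_ ?_
  · simp
  · intro z _; simpa using ZMod.val_lt z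
  · intro t ht; exact ZMod.val_cast_of_lt (by simpa using ht)
  · intro z _; simp
  · simp

lemma sum_periodic (q M : ℕ) [NeZero q] (F : ZMod q → ℝ) :
    ∑ t ∈ range (q * M), F (t : ZMod q) = M * ∑ z, F z := by
  induction M with
  | zero => simp
  | succ M ih =>
    rw [Nat.mul_succ, sum_range_add, ih]
    have : ∀ x : ℕ, ((q * M + x : ℕ) : ZMod q) = (x : ZMod q) := by intro x; simp
    simp only [this, sum_range_zmod]
    push_cast; ring

lemma sum_valMinAbs_le (q : ℕ) [NeZero q] (g : ℕ → ℝ) (hg : ∀ b, 0 ≤ g b) (hg0 : g 0 = 0) :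
    ∑ z : ZMod q, g z.valMinAbs.natAbs ≤ 2 * ∑ b ∈ Ico 1 (q + 1), g b := by
  have h1 : ∀ z : ZMod q, g z.valMinAbs.natAbs ≤ g z.val + g (q - z.val) := by
    intro z
    rw [ZMod.valMinAbs_natAbs_eq_min]
    rcases min_choice z.val (q - z.val) with h | h <;> rw [h]
    · linarith [hg (q - z.val)]
    · linarith [hg z.val]
  have h2 : ∑ b ∈ Ico 1 (q + 1), g b = ∑ b ∈ range (q + 1), g b := by
    rw [range_eq_Ico, sum_eq_sum_Ico_succ_bot (Nat.succ_pos q), hg0, zero_add]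
  have h3 : ∑ z : ZMod q, g z.val ≤ ∑ b ∈ Ico 1 (q + 1), g b := by
    rw [← sum_range_zmod q (fun z => g z.val), h2, sum_range_succ]
    have : ∑ t ∈ range q, g ((t : ZMod q).val) = ∑ t ∈ range q, g t :=
      sum_congr rfl fun t ht => by rw [ZMod.val_cast_of_lt (by simpa using ht)]
    rw [this]; linarith [hg q]
  have h4 : ∑ z : ZMod q, g (q - z.val) ≤ ∑ b ∈ Ico 1 (q + 1), g b := by
    rw [← sum_range_zmod q (fun z => g (q - z.val)), h2, ← sum_range_reflect g (q + 1), sum_range_succ]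
    have : ∑ t ∈ range q, g (q - (t : ZMod q).val) = ∑ t ∈ range q, g (q + 1 - 1 - t) :=
      sum_congr rfl fun t ht => by rw [ZMod.val_cast_of_lt (by simpa using ht)]; simp
    rw [this]; linarith [hg (q + 1 - 1 - q)]
  calc _ ≤ ∑ z : ZMod q, (g z.val + g (q - z.val)) := sum_le_sum fun z _ => h1 z
    _ ≤ _ := by rw [sum_add_distrib]; linarith

lemma sum_Ico_rpow_half_le (n : ℕ) :
    ∑ b ∈ Ico 1 (n + 1), (b : ℝ) ^ (-(1 / 2) : ℝ) ≤ 3 * √n := by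
  rcases Nat.eq_zero_or_pos n with rfl | hn
  · simp
  have h := sum_Ico_rpow_neg_le (1 / 2) (by norm_num) (by norm_num) (n + 1)
  refine h.trans ?_
  have hn' : (1 : ℝ) ≤ n := by exact_mod_cast hn
  rw [show (1 - 1 / 2 : ℝ) = 1 / 2 by norm_num, ← Real.sqrt_eq_rpow, div_le_iff₀ (by norm_num)]
  rw [show 3 * √(n : ℝ) * (1 / 2) = √((9 / 4) * n) by
    rw [Real.sqrt_mul (by norm_num), show (9 / 4 : ℝ) = (3 / 2) ^ 2 by norm_num,
      Real.sqrt_sq (by norm_num)]; ring]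
  apply Real.sqrt_le_sqrt
  push_cast; linarith

/-- Used to sum over the residues `b` for which the second-derivative test has to be used. -/
lemma sum_truncated_le (n : ℕ) (B : ℝ) (hB : 0 ≤ B) :
    ∑ b ∈ Ico 1 n, (if (b : ℝ) ≤ B then (b : ℝ) ^ (-(1 / 2) : ℝ) else 0) ≤ 3 * √B := by
  rw [← sum_filter]
  calc _ ≤ ∑ b ∈ Ico 1 (⌊B⌋₊ + 1), (b : ℝ) ^ (-(1 / 2) : ℝ) := by
        refine sum_le_sum_of_subset_of_nonneg ?_ fun _ _ _ => by positivity
        intro b hb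
        rw [mem_filter, mem_Ico] at hb
        rw [mem_Ico]
        exact ⟨hb.1.1, Nat.lt_succ_of_le (Nat.le_floor hb.2)⟩
    _ ≤ 3 * √(⌊B⌋₊ : ℝ) := sum_Ico_rpow_half_le _
    _ ≤ _ := by gcongr; exact Nat.floor_le hB

/-- Bound for one correlation sum, when the second differences are near `a / q`; `b` is the
least absolute residue of `t * a` modulo `q`. -/
lemma correlation_le (φ : ℕ → ℝ) (N q t : ℕ) (a k b : ℤ) (r : ℝ) (hr : 1 ≤ r) (hq : 0 < q)
    (hinc : ∀ x, x + 1 < N → secondDiff φ x + 1 / r ^ 6 ≤ secondDiff φ (x + 1))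
    (hV : ∀ x < N, ∀ x' < N, secondDiff φ x ≤ secondDiff φ x' + 1 / (16 * r ^ 3))
    (h0 : |secondDiff φ 0 - a / q| ≤ 1 / (q * r ^ 2))
    (ht : 0 < t) (htr : (t : ℝ) ≤ r ^ 2 / 4) (htk : t * a = k * q + b) (hb : |b| * 2 ≤ q) :
    ‖∑ j ∈ range (N - t), e (φ (j + t) - φ j)‖ ≤
      (4 * q * (b.natAbs : ℝ) ^ (-(1 / 2) : ℝ) + 4 * √(r ^ 3 * q) *
        (if (b.natAbs : ℝ) ≤ q / (16 * r) then (b.natAbs : ℝ) ^ (-(1 / 2) : ℝ) else 0)) +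
      (if b = 0 then 8 * r ^ 3 * (t : ℝ) ^ (-(1 / 2) : ℝ) else 0) := by
  have hr0 : 0 < r := by linarith
  have hq' : (0 : ℝ) < q := by exact_mod_cast hq
  have ht' : (0 : ℝ) < t := by exact_mod_cast ht
  rcases Nat.eq_zero_or_pos N with rfl | hN
  · simp only [Nat.zero_sub, range_zero, sum_empty, norm_zero]
    split_ifs <;> positivity
  have htk' : (t : ℝ) * (a / q) = k + b / q := by
    have : (t : ℝ) * a = k * q + b := by exact_mod_cast htk
    rw [mul_div_assoc', this]; field_simp
  -- This bound is available for every shift; it is used when Kusmin–Landau is not.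
  have hsec : ‖∑ j ∈ range (N - t), e (φ (j + t) - φ j)‖ ≤ 8 * r ^ 3 * (t : ℝ) ^ (-(1 / 2) : ℝ) := by
    have h := diff_second_test φ N t (1 / r ^ 6) (1 / (16 * r ^ 3)) (by positivity) ht hinc hV
      (by
        rw [mul_one_div, div_le_one (by positivity)]
        have : r ^ 2 ≤ r ^ 6 := pow_le_pow_right₀ hr (by norm_num)
        nlinarith)
      (by
        rw [mul_one_div, div_le_iff₀ (by positivity)]
        have : r ^ 2 ≤ r ^ 3 := pow_le_pow_right₀ hr (by norm_num)
        nlinarith)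
    refine h.trans (le_of_eq ?_)
    rw [mul_one_div, Real.sqrt_div ht'.le, show r ^ 6 = (r ^ 3) ^ 2 by ring,
      Real.sqrt_sq (by positivity), Real.rpow_neg ht'.le, ← Real.sqrt_eq_rpow]
    have : 0 < √(t : ℝ) := Real.sqrt_pos.2 ht'
    field_simp
  by_cases hb0 : b = 0
  · subst hb0
    simp only [Int.natAbs_zero, Nat.cast_zero, if_true]
    rw [Real.zero_rpow (by norm_num)]
    simpa using hsec
  simp only [hb0, if_false, add_zero]
  set β : ℝ := (b.natAbs : ℝ) with hβ
  have hβ1 : (1 : ℝ) ≤ β := by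
    rw [hβ]; exact_mod_cast Int.natAbs_pos.2 hb0
  have hβ0 : 0 < β := by linarith
  have hβb : β = |(b : ℝ)| := by rw [hβ, Nat.cast_natAbs]; push_cast; rfl
  have hβq : β * 2 ≤ q := by rw [hβb]; exact_mod_cast hb
  have hβhalf : β ^ (-(1 / 2) : ℝ) = (√β)⁻¹ := by
    rw [Real.rpow_neg hβ0.le, ← Real.sqrt_eq_rpow]
  have hsβ : 0 < √β := Real.sqrt_pos.2 hβ0
  have hsβ2 : √β ^ 2 = β := Real.sq_sqrt hβ0.le
  have hsβ1 : 1 ≤ √β := Real.one_le_sqrt.2 hβ1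
  by_cases hcrit : (t : ℝ) * (1 / (16 * r ^ 3)) ≤ β / (4 * q)
  · -- The slope stays near `k + b / q`, at distance at least `|b| / (2 * q)` from the integers.
    have hgoal : ‖∑ j ∈ range (N - t), e (φ (j + t) - φ j)‖ ≤ 2 / (β / (2 * q)) := by
      have h0' := abs_le.1 h0
      set E := 1 / ((q : ℝ) * r ^ 2) with hE
      set V := 1 / (16 * r ^ 3) with hVdef
      have htE : t * E ≤ β / (4 * q) := by
        rw [hE, mul_one_div, div_le_div_iff₀ (by positivity) (by positivity)]
        have h5 : (t : ℝ) * (4 * q) ≤ r ^ 2 / 4 * (4 * q) := by gcongr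
        have h6 : (1 : ℝ) * (q * r ^ 2) ≤ β * (q * r ^ 2) := by gcongr
        linarith
      have hbd : ∀ x < N, a / q - E - V ≤ secondDiff φ x ∧ secondDiff φ x ≤ a / q + E + V := by
        intro x hx
        have e1 := hV x hx 0 hN
        have e2 := hV 0 hN x hx
        constructor <;> linarith
      have hmono : ∀ x, x + 1 < N → secondDiff φ x ≤ secondDiff φ (x + 1) := fun x hx => by
        have := hinc x hx
        have : 0 < 1 / r ^ 6 := by positivity
        linarith
      have hx1 : (t : ℝ) * (a / q - E - V) = k + b / q - t * E - t * V := by rw [← htk']; ring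
      have hx2 : (t : ℝ) * (a / q + E + V) = k + b / q + t * E + t * V := by rw [← htk']; ring
      have hd1 : β / (4 * q) = β / q / 4 := by field_simp
      have hd2 : β / (2 * q) = β / q / 2 := by field_simp
      have hd3 : β / q ≤ 1 / 2 := by rw [div_le_iff₀ hq']; linarith
      have hd0 : 0 < β / q := by positivity
      rcases lt_or_gt_of_ne hb0 with hneg | hpos
      · have hbb : (b : ℝ) / q = -(β / q) := by
          rw [hβb, abs_of_neg (by exact_mod_cast hneg)]; ring
        refine diff_kusmin_landau φ N t (a / q - E - V) (a / q + E + V) (β / (2 * q)) (k - 1)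
          (by positivity) hmono hbd ?_ ?_
        · rw [hx1, hbb]; push_cast; linarith
        · rw [hx2, hbb]; push_cast; linarith
      · have hbb : (b : ℝ) / q = β / q := by
          rw [hβb, abs_of_pos (by exact_mod_cast hpos)]
        refine diff_kusmin_landau φ N t (a / q - E - V) (a / q + E + V) (β / (2 * q)) k
          (by positivity) hmono hbd ?_ ?_
        · rw [hx1, hbb]; linarith
        · rw [hx2, hbb]; linarith
    have h7 : 2 / (β / (2 * q)) ≤ 4 * q * β ^ (-(1 / 2) : ℝ) := by
      rw [hβhalf, div_div_eq_mul_div, ← div_eq_mul_inv, div_le_div_iff₀ hβ0 hsβ]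
      have : √β ≤ β := by nlinarith
      nlinarith
    have h8 : 0 ≤ 4 * √(r ^ 3 * q) * (if β ≤ q / (16 * r) then β ^ (-(1 / 2) : ℝ) else 0) := by
      split_ifs <;> positivity
    linarith
  · push Not at hcrit
    rw [div_lt_iff₀ (by positivity), mul_one_div, div_mul_eq_mul_div, lt_div_iff₀ (by positivity)]
      at hcrit
    have h9 : 4 * (r ^ 3 * β) < t * q := by linarith
    have h10 : β ≤ q / (16 * r) := by
      rw [le_div_iff₀ (by positivity)]
      have h11 : (t : ℝ) * q ≤ r ^ 2 / 4 * q := by gcongr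
      have h12 : r ^ 2 * (β * (16 * r)) ≤ r ^ 2 * q := by nlinarith
      exact le_of_mul_le_mul_left h12 (by positivity)
    rw [if_pos h10]
    have h13 : 8 * r ^ 3 * (t : ℝ) ^ (-(1 / 2) : ℝ) ≤ 4 * √(r ^ 3 * q) * β ^ (-(1 / 2) : ℝ) := by
      rw [hβhalf, Real.rpow_neg ht'.le, ← Real.sqrt_eq_rpow, ← div_eq_mul_inv, ← div_eq_mul_inv,
        div_le_div_iff₀ (Real.sqrt_pos.2 ht') hsβ]
      have h14 : 2 * r ^ 3 * √β ≤ √(r ^ 3 * q) * √t := by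
        rw [← Real.sqrt_mul (by positivity)]
        apply Real.le_sqrt_of_sq_le
        rw [mul_pow, hsβ2]
        have : 0 < r ^ 3 := by positivity
        nlinarith
      nlinarith
    have h15 : 0 ≤ 4 * q * β ^ (-(1 / 2) : ℝ) := by positivity
    linarith

/-- Contribution of the shifts divisible by `q`, for which the residue of `t * a` vanishes. -/
lemma sum_multiples_le (q M T : ℕ) (hq : 0 < q) (hT : T ≤ q * (M + 1)) :
    ∑ t ∈ Ico 1 T, (if q ∣ t then (t : ℝ) ^ (-(1 / 2) : ℝ) else 0) ≤ 3 * √M / √q := by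
  rw [← sum_filter]
  calc _ ≤ ∑ t ∈ (Ico 1 (M + 1)).image (fun s => q * s), (t : ℝ) ^ (-(1 / 2) : ℝ) := by
        refine sum_le_sum_of_subset_of_nonneg ?_ fun _ _ _ => by positivity
        intro t ht
        rw [mem_filter, mem_Ico] at ht
        obtain ⟨⟨h1, h2⟩, s, rfl⟩ := ht
        rw [mem_image]
        refine ⟨s, ?_, rfl⟩
        rw [mem_Ico]
        exact ⟨Nat.pos_of_mul_pos_left h1, Nat.lt_of_mul_lt_mul_left (h2.trans_le hT)⟩
    _ = ∑ s ∈ Ico 1 (M + 1), ((q * s : ℕ) : ℝ) ^ (-(1 / 2) : ℝ) := by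
        rw [sum_image]
        intro x _ y _ h
        exact Nat.eq_of_mul_eq_mul_left hq h
    _ = (√q)⁻¹ * ∑ s ∈ Ico 1 (M + 1), (s : ℝ) ^ (-(1 / 2) : ℝ) := by
        rw [mul_sum]
        refine sum_congr rfl fun s _ => ?_
        rw [Nat.cast_mul, Real.mul_rpow (by positivity) (by positivity),
          Real.rpow_neg (by positivity) (1 / 2), ← Real.sqrt_eq_rpow]
    _ ≤ (√q)⁻¹ * (3 * √M) := by
        gcongr
        exact sum_Ico_rpow_half_le M
    _ = _ := by rw [div_eq_mul_inv, mul_comm]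

set_option maxHeartbeats 400000 in
/-- The short sum when the second differences are near `a / q` with `r ≤ q ≤ r ^ 2`: since `a` is
coprime to `q`, the residues of `t * a` are evenly distributed and bad shifts are rare. -/
lemma large_denominator (φ : ℕ → ℝ) (N q : ℕ) (a : ℤ) (r : ℝ) (hr : 1 ≤ r)
    (hrq : r ≤ q) (hqr : (q : ℝ) ≤ r ^ 2) (hcop : IsCoprime a (q : ℤ)) (hN : (N : ℝ) ≤ r ^ 3)
    (hinc : ∀ x, x + 1 < N → secondDiff φ x + 1 / r ^ 6 ≤ secondDiff φ (x + 1))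
    (hV : ∀ x < N, ∀ x' < N, secondDiff φ x ≤ secondDiff φ x' + 1 / (16 * r ^ 3))
    (h0 : |secondDiff φ 0 - a / q| ≤ 1 / (q * r ^ 2)) :
    ‖∑ j ∈ range N, e (φ j)‖ ≤ 60 * r ^ 2 := by
  have hr0 : 0 < r := by linarith
  have hq' : (0 : ℝ) < q := by linarith
  have hq : 0 < q := by exact_mod_cast hq'
  have : NeZero q := ⟨hq.ne'⟩
  set T := ⌊r ^ 2 / 4⌋₊ + 1 with hT
  set M := T / q + 1 with hM
  have hTq : T ≤ q * M := by
    rw [hM]; exact (Nat.lt_mul_div_succ T hq).le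
  have hTlo : r ^ 2 / 4 ≤ T := by rw [hT]; push_cast; exact (Nat.lt_floor_add_one _).le
  have hThi : (T : ℝ) ≤ r ^ 2 / 4 + 1 := by
    rw [hT]; push_cast
    linarith [Nat.floor_le (show 0 ≤ r ^ 2 / 4 by positivity)]
  have hr2 : 1 ≤ r ^ 2 := one_le_pow₀ hr
  have hMq : (M : ℝ) * q ≤ 3 * r ^ 2 := by
    have h1 : T / q * q ≤ T := Nat.div_mul_le_self T q
    have h1' : ((T / q : ℕ) : ℝ) * q ≤ T := by exact_mod_cast h1
    rw [hM]; push_cast; linarith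
  set g : ℕ → ℝ := fun b => 4 * q * (b : ℝ) ^ (-(1 / 2) : ℝ) + 4 * √(r ^ 3 * q) *
        (if (b : ℝ) ≤ q / (16 * r) then (b : ℝ) ^ (-(1 / 2) : ℝ) else 0) with hg
  have hgnn : ∀ b, 0 ≤ g b := by
    intro b; simp only [hg]; split_ifs <;> positivity
  have hg0 : g 0 = 0 := by
    simp only [hg, Nat.cast_zero]
    rw [Real.zero_rpow (by norm_num)]; simp
  have hgsum : ∑ b ∈ Ico 1 (q + 1), g b ≤ 12 * q * √q + 3 * r * q := by
    simp only [hg]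
    rw [sum_add_distrib, ← mul_sum, ← mul_sum]
    have h1 := sum_Ico_rpow_half_le q
    have h2 := sum_truncated_le (q + 1) (q / (16 * r)) (by positivity)
    have h3 : √(r ^ 3 * q) * √(q / (16 * r)) = r * q / 4 := by
      rw [← Real.sqrt_mul (by positivity),
        show r ^ 3 * q * (q / (16 * r)) = (r * q / 4) ^ 2 by field_simp; norm_num,
        Real.sqrt_sq (by positivity)]
    have h4 : 4 * (q : ℝ) * ∑ b ∈ Ico 1 (q + 1), (b : ℝ) ^ (-(1 / 2) : ℝ) ≤ 4 * q * (3 * √q) := by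
      gcongr
    have h5 := mul_le_mul_of_nonneg_left h2 (show 0 ≤ 4 * √(r ^ 3 * q) by positivity)
    nlinarith
  have hunit : IsUnit (a : ZMod q) := (ZMod.coe_int_isUnit_iff_isCoprime a q).2 hcop.symm
  obtain ⟨u, hu⟩ := hunit
  -- the residue attached to the shift `t`
  set b : ℕ → ℤ := fun t => ((t : ZMod q) * (u : ZMod q)).valMinAbs with hb
  have hbz : ∀ t : ℕ, b t = 0 → q ∣ t := by
    intro t ht
    simp only [hb, ZMod.valMinAbs_eq_zero] at ht
    rw [Units.mul_left_eq_zero] at ht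
    exact (ZMod.natCast_eq_zero_iff t q).1 ht
  have hcorr : ∀ t ∈ Ico 1 T, ‖∑ j ∈ range (N - 1 * t), e (φ (j + 1 * t) - φ j)‖ ≤
      g (b t).natAbs + 8 * r ^ 3 * (if q ∣ t then (t : ℝ) ^ (-(1 / 2) : ℝ) else 0) := by
    intro t ht
    rw [mem_Ico] at ht
    have htr : (t : ℝ) ≤ r ^ 2 / 4 := (Nat.le_floor_iff (by positivity)).1 (by omega)
    have hdvd : (q : ℤ) ∣ t * a - b t := by
      rw [← ZMod.intCast_zmod_eq_zero_iff_dvd]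
      simp only [hb]
      push_cast
      rw [hu]; ring
    obtain ⟨k, hk⟩ := hdvd
    have hmem := ZMod.valMinAbs_mem_Ioc ((t : ZMod q) * (u : ZMod q))
    have hb2 : |b t| * 2 ≤ q := by
      change b t * 2 ∈ _ at hmem
      have h1 := hmem.1
      have h2 := hmem.2
      rcases abs_cases (b t) with ⟨h, _⟩ | ⟨h, _⟩ <;> rw [h] <;> linarith
    have h := correlation_le φ N q t a k (b t) r hr hq hinc hV h0 (by omega) htr
      (by linarith) hb2
    rw [one_mul]
    refine h.trans (add_le_add le_rfl ?_)
    by_cases hbt : b t = 0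
    · rw [if_pos hbt, if_pos (hbz t hbt)]
    · rw [if_neg hbt]
      split_ifs <;> positivity
  have hper : ∑ t ∈ Ico 1 T, g (b t).natAbs ≤ M * (2 * (12 * q * √q + 3 * r * q)) := by
    calc _ ≤ ∑ t ∈ range (q * M), g (b t).natAbs := by
          refine sum_le_sum_of_subset_of_nonneg ?_ fun _ _ _ => hgnn _
          intro t ht
          rw [mem_Ico] at ht
          rw [mem_range]; omega
      _ = M * ∑ z : ZMod q, g (z * (u : ZMod q)).valMinAbs.natAbs :=
          sum_periodic q M (fun z => g (z * (u : ZMod q)).valMinAbs.natAbs)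
      _ = M * ∑ z : ZMod q, g z.valMinAbs.natAbs := by
          congr 1
          exact Equiv.sum_comp (Units.mulRight u) (fun z => g z.valMinAbs.natAbs)
      _ ≤ _ := by
          gcongr
          exact (sum_valMinAbs_le q g hgnn hg0).trans (by linarith)
  have hsq : √(q : ℝ) ≤ r := by
    rw [Real.sqrt_le_left hr0.le]; exact hqr
  have hper' : ∑ t ∈ Ico 1 T, g (b t).natAbs ≤ 90 * r ^ 3 := by
    refine hper.trans ?_
    calc (M : ℝ) * (2 * (12 * q * √q + 3 * r * q)) ≤ M * (2 * (12 * q * r + 3 * r * q)) := by gcongr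
      _ = 30 * r * (M * q) := by ring
      _ ≤ 30 * r * (3 * r ^ 2) := by gcongr
      _ = _ := by ring
  have hmul : ∑ t ∈ Ico 1 T, 8 * r ^ 3 * (if q ∣ t then (t : ℝ) ^ (-(1 / 2) : ℝ) else 0) ≤
      48 * r ^ 3 := by
    rw [← mul_sum]
    have h1 := sum_multiples_le q M T hq (hTq.trans (Nat.mul_le_mul_left _ (Nat.le_succ M)))
    have h2 : 3 * √(M : ℝ) / √q ≤ 6 := by
      rw [div_le_iff₀ (Real.sqrt_pos.2 hq')]
      have h3 : √(M : ℝ) ≤ √(4 * q) := by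
        apply Real.sqrt_le_sqrt
        have h4 : (M : ℝ) * q ≤ 4 * q * q := by nlinarith
        exact le_of_mul_le_mul_right h4 hq'
      rw [Real.sqrt_mul (by norm_num), show (4 : ℝ) = 2 ^ 2 by norm_num,
        Real.sqrt_sq (by norm_num)] at h3
      linarith
    have h5 := mul_le_mul_of_nonneg_left (h1.trans h2) (show 0 ≤ 8 * r ^ 3 by positivity)
    linarith
  have hsum : ∑ t ∈ Ico 1 T, ‖∑ j ∈ range (N - 1 * t), e (φ (j + 1 * t) - φ j)‖ ≤
      138 * r ^ 3 := by
    refine (sum_le_sum hcorr).trans ?_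
    rw [sum_add_distrib]; linarith
  have hvdc := van_der_corput_phase φ N 1 T (by omega)
  set S := ‖∑ j ∈ range N, e (φ j)‖ with hS
  have hr3 : r ^ 2 ≤ r ^ 3 := pow_le_pow_right₀ hr (by norm_num)
  have h1 : S ^ 2 * (r ^ 2 / 4) ≤ (3 * r ^ 3) * (277 * r ^ 3) := by
    calc S ^ 2 * (r ^ 2 / 4) ≤ S ^ 2 * T := by gcongr
      _ ≤ _ := hvdc
      _ ≤ _ := by
        push_cast
        gcongr
        · linarith
        · linarith
  have h2 : S ^ 2 ≤ (60 * r ^ 2) ^ 2 := by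
    have h3 : S ^ 2 * (r ^ 2 / 4) ≤ (60 * r ^ 2) ^ 2 * (r ^ 2 / 4) := by
      refine h1.trans ?_
      have h4 : 0 ≤ r ^ 6 := by positivity
      have h5 : 3 * r ^ 3 * (277 * r ^ 3) = 831 * r ^ 6 := by ring
      have h6 : (60 * r ^ 2) ^ 2 * (r ^ 2 / 4) = 900 * r ^ 6 := by ring
      linarith
    exact le_of_mul_le_mul_right h3 (by positivity)
  exact (abs_le.1 (abs_le_of_sq_le_sq h2 (by positivity))).2

/-! ### Small denominators -/

/-- Weyl differencing with shifts divisible by `q`, when the second differences lie on one side of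
`a / q` at a distance between `κ` and `2 * κ`. The correlation `G` is at most both `n` and
`2 / (q * t * κ)`; the bound `G ^ 4 ≤ n * (2 / (q * t * κ)) ^ 3` interpolates between the two and
avoids a logarithm in the sum over `t`. -/
lemma differencing_small_denominator (φ : ℕ → ℝ) (n q T : ℕ) (a : ℤ) (κ w : ℝ) (hq : 0 < q)
    (hT : 0 < T) (hκ : 0 < κ) (hw : 0 ≤ w)
    (hmono : ∀ x, x + 1 < n → secondDiff φ x ≤ secondDiff φ (x + 1))
    (hη : (∀ x < n, a / q + κ ≤ secondDiff φ x ∧ secondDiff φ x ≤ a / q + 2 * κ) ∨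
      (∀ x < n, a / q - 2 * κ ≤ secondDiff φ x ∧ secondDiff φ x ≤ a / q - κ))
    (hTκ : ∀ t < T, 3 * (q * t * κ) ≤ 1) (hnw : n * T * (2 / (q * κ)) ^ 3 ≤ w ^ 4) :
    ‖∑ j ∈ range n, e (φ j)‖ ^ 2 * T ≤ (n + q * T) * (n + 8 * w) := by
  have hq' : (0 : ℝ) < q := by exact_mod_cast hq
  have hT' : (0 : ℝ) < T := by exact_mod_cast hT
  refine (van_der_corput_phase φ n q T hT).trans ?_
  have hcorr : ∀ t ∈ Ico 1 T, ‖∑ j ∈ range (n - q * t), e (φ (j + q * t) - φ j)‖ ≤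
      w * (T : ℝ) ^ (-(1 / 4) : ℝ) * (t : ℝ) ^ (-(3 / 4) : ℝ) := by
    intro t ht
    rw [mem_Ico] at ht
    have ht0 : (0 : ℝ) < t := by exact_mod_cast ht.1
    set G := ‖∑ j ∈ range (n - q * t), e (φ (j + q * t) - φ j)‖ with hG
    have hG0 : 0 ≤ G := norm_nonneg _
    have h1 : G ≤ n := by
      refine (norm_sum_e_le (fun j => φ (j + q * t) - φ j) (n - q * t)).trans ?_
      exact_mod_cast Nat.sub_le _ _
    have h3 := hTκ t ht.2
    have hpos : 0 < q * t * κ := by positivity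
    have h2 : G ≤ 2 / (q * t * κ) := by
      rcases hη with hη | hη
      · refine diff_kusmin_landau φ n (q * t) (a / q + κ) (a / q + 2 * κ) (q * t * κ) (t * a)
          hpos hmono hη ?_ ?_
        · push_cast; apply le_of_eq; field_simp
        · push_cast
          have : (q : ℝ) * t * (a / q + 2 * κ) = t * a + 2 * (q * t * κ) := by field_simp
          rw [this]; linarith
      · refine diff_kusmin_landau φ n (q * t) (a / q - 2 * κ) (a / q - κ) (q * t * κ) (t * a - 1)
          hpos hmono hη ?_ ?_
        · push_cast
          have : (q : ℝ) * t * (a / q - 2 * κ) = t * a - 2 * (q * t * κ) := by field_simp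
          rw [this]; linarith
        · push_cast
          have : (q : ℝ) * t * (a / q - κ) = t * a - q * t * κ := by field_simp
          rw [this]; linarith
    have h4 : G ^ 4 ≤ (w * (T : ℝ) ^ (-(1 / 4) : ℝ) * (t : ℝ) ^ (-(3 / 4) : ℝ)) ^ 4 := by
      have e1 : ((T : ℝ) ^ (-(1 / 4) : ℝ)) ^ 4 = (T : ℝ)⁻¹ := by
        rw [← Real.rpow_natCast, ← Real.rpow_mul hT'.le]
        norm_num [Real.rpow_neg_one]
      have e2 : ((t : ℝ) ^ (-(3 / 4) : ℝ)) ^ 4 = ((t : ℝ) ^ 3)⁻¹ := by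
        rw [← Real.rpow_natCast, ← Real.rpow_mul ht0.le,
          show (-(3 / 4) : ℝ) * ((4 : ℕ) : ℝ) = -((3 : ℕ) : ℝ) by norm_num,
          Real.rpow_neg ht0.le, Real.rpow_natCast]
      rw [mul_pow, mul_pow, e1, e2]
      calc G ^ 4 = G * G ^ 3 := by ring
        _ ≤ n * (2 / (q * t * κ)) ^ 3 := by gcongr
        _ = (n * T * (2 / (q * κ)) ^ 3) * (T : ℝ)⁻¹ * ((t : ℝ) ^ 3)⁻¹ := by field_simp
        _ ≤ _ := by gcongr
    exact le_of_pow_le_pow_left₀ (by norm_num) (by positivity) h4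
  have hsum : ∑ t ∈ Ico 1 T, ‖∑ j ∈ range (n - q * t), e (φ (j + q * t) - φ j)‖ ≤ 4 * w := by
    refine (sum_le_sum hcorr).trans ?_
    rw [← mul_sum]
    have h := sum_Ico_rpow_neg_le (3 / 4) (by norm_num) (by norm_num) T
    calc _ ≤ w * (T : ℝ) ^ (-(1 / 4) : ℝ) * ((T : ℝ) ^ (1 - 3 / 4 : ℝ) / (1 - 3 / 4)) := by gcongr
      _ = w * ((T : ℝ) ^ (-(1 / 4) : ℝ) * (T : ℝ) ^ (1 / 4 : ℝ)) * 4 := by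
        rw [show (1 - 3 / 4 : ℝ) = 1 / 4 by norm_num]; ring
      _ = 4 * w := by rw [← Real.rpow_add hT']; norm_num; ring
  refine mul_le_mul_of_nonneg_left ?_ (by positivity)
  linarith

/-- Small denominator, second differences staying away from `a / q`. -/
lemma small_denominator_far (φ : ℕ → ℝ) (N q : ℕ) (a : ℤ) (r κ : ℝ) (hr : 1 ≤ r) (hq : 0 < q)
    (hN : (N : ℝ) ≤ r ^ 3) (hκ1 : 15 / 16 * (1 / r ^ 3) ≤ κ) (hκ2 : κ ≤ 1 / (q * r ^ 2))
    (hmono : ∀ x, x + 1 < N → secondDiff φ x ≤ secondDiff φ (x + 1))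
    (hη : (∀ x < N, a / q + κ ≤ secondDiff φ x ∧ secondDiff φ x ≤ a / q + 2 * κ) ∨
      (∀ x < N, a / q - 2 * κ ≤ secondDiff φ x ∧ secondDiff φ x ≤ a / q - κ)) :
    ‖∑ j ∈ range N, e (φ j)‖ ≤ 24 * r ^ 2 := by
  have hq' : (0 : ℝ) < q := by exact_mod_cast hq
  have hr0 : 0 < r := by linarith
  have hκ : 0 < κ := lt_of_lt_of_le (by positivity) hκ1
  set Z := 2 / (q * κ) with hZ
  have hZ0 : 0 < Z := by positivity
  have hZ1 : 2 * r ^ 2 ≤ Z := by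
    rw [hZ, le_div_iff₀ (by positivity)]
    rw [le_div_iff₀ (by positivity)] at hκ2
    nlinarith
  have hZ2 : q * Z ≤ 3 * r ^ 3 := by
    have : q * Z = 2 / κ := by rw [hZ]; field_simp
    rw [this, div_le_iff₀ hκ]
    have h1 : 3 * r ^ 3 * (15 / 16 * (1 / r ^ 3)) ≤ 3 * r ^ 3 * κ := by gcongr
    have h2 : 3 * r ^ 3 * (15 / 16 * (1 / r ^ 3)) = 45 / 16 := by field_simp; norm_num
    linarith
  have hr2 : 1 ≤ r ^ 2 := one_le_pow₀ hr
  set T := ⌊Z / 16⌋₊ + 1 with hT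
  have hTlo : Z / 16 ≤ T := by rw [hT]; push_cast; exact (Nat.lt_floor_add_one _).le
  have hThi : (T : ℝ) ≤ Z := by
    rw [hT]; push_cast
    linarith [Nat.floor_le (show 0 ≤ Z / 16 by positivity)]
  have h := differencing_small_denominator φ N q T a κ (r * Z) hq (by omega) hκ (by positivity)
    hmono hη ?_ ?_
  · set S := ‖∑ j ∈ range N, e (φ j)‖ with hS
    have h1 : S ^ 2 * (Z / 16) ≤ (4 * r ^ 3) * (9 * (r * Z)) := by
      calc S ^ 2 * (Z / 16) ≤ S ^ 2 * T := by gcongr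
        _ ≤ _ := h
        _ ≤ _ := by
          gcongr
          · have : (q : ℝ) * T ≤ q * Z := by gcongr
            linarith
          · have : r * (2 * r ^ 2) ≤ r * Z := by gcongr
            nlinarith
    have h2 : S ^ 2 ≤ (24 * r ^ 2) ^ 2 := by
      have h3 : S ^ 2 * (Z / 16) ≤ (24 * r ^ 2) ^ 2 * (Z / 16) := by
        refine h1.trans (le_of_eq ?_); ring
      exact le_of_mul_le_mul_right h3 (by positivity)
    exact (abs_le.1 (abs_le_of_sq_le_sq h2 (by positivity))).2
  · intro t ht
    have ht' : (t : ℝ) ≤ Z / 16 := (Nat.le_floor_iff (by positivity)).1 (by omega)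
    have : q * t * κ ≤ q * (Z / 16) * κ := by gcongr
    have h2 : q * (Z / 16) * κ = 1 / 8 := by rw [hZ]; field_simp; norm_num
    linarith
  · rw [← hZ]
    have h3 : r ^ 3 ≤ r ^ 4 := pow_le_pow_right₀ hr (by norm_num)
    calc (N : ℝ) * T * Z ^ 3 ≤ r ^ 4 * Z * Z ^ 3 := by gcongr; exact hN.trans h3
      _ = _ := by ring

/-- Small denominator, second differences at distance between `s / r ^ 4` and `2 * s / r ^ 4` from
`a / q`; here `σ` stands for `s ^ (-1 / 8)`. -/
lemma small_denominator_piece (φ : ℕ → ℝ) (n q : ℕ) (a : ℤ) (r s σ : ℝ) (hr : 1 ≤ r) (hq : 0 < q)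
    (hqr : (q : ℝ) ≤ r) (hs1 : 1 ≤ s) (hs2 : s ≤ 2 * r) (hσ : 0 < σ) (hσs : σ ^ 8 * s = 1)
    (hinc : ∀ x, x + 1 < n → secondDiff φ x + 1 / r ^ 6 ≤ secondDiff φ (x + 1))
    (hη : (∀ x < n, a / q + s / r ^ 4 ≤ secondDiff φ x ∧
        secondDiff φ x ≤ a / q + 2 * (s / r ^ 4)) ∨
      (∀ x < n, a / q - 2 * (s / r ^ 4) ≤ secondDiff φ x ∧
        secondDiff φ x ≤ a / q - s / r ^ 4)) :
    ‖∑ j ∈ range n, e (φ j)‖ ≤ 12 * √(s * r ^ 3) + 40 * r ^ 2 * σ := by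
  have hq' : (0 : ℝ) < q := by exact_mod_cast hq
  have hr0 : 0 < r := by linarith
  have hs0 : 0 < s := by linarith
  rcases Nat.eq_zero_or_pos n with rfl | hn
  · simp; positivity
  set D := s * r ^ 2 with hD
  have hr2 : r ≤ r ^ 2 := by nlinarith
  have hD1 : q ≤ D := by rw [hD]; nlinarith
  have hD0 : 0 < D := by positivity
  have hD2 : 1 ≤ D := by rw [hD]; nlinarith
  have hnD : (n : ℝ) ≤ 2 * D := by
    have h1 := le_of_increments (secondDiff φ) n (1 / r ^ 6) hinc 0 (n - 1) (by omega)
    have h4 : ((n - 1 : ℕ) : ℝ) = n - 1 := by rw [Nat.cast_sub hn]; simp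
    rw [h4, zero_add] at h1
    have h5 : ((n : ℝ) - 1) * (1 / r ^ 6) ≤ s / r ^ 4 := by
      rcases hη with hη | hη
      · have := (hη 0 hn).1
        have := (hη (n - 1) (by omega)).2
        linarith
      · have := (hη 0 hn).1
        have := (hη (n - 1) (by omega)).2
        linarith
    rw [mul_one_div, div_le_div_iff₀ (by positivity) (by positivity)] at h5
    have h6 : ((n : ℝ) - 1) * r ^ 4 ≤ D * r ^ 4 := by rw [hD]; nlinarith
    have h7 := le_of_mul_le_mul_right h6 (by positivity)
    linarith
  have hmono : ∀ x, x + 1 < n → secondDiff φ x ≤ secondDiff φ (x + 1) := fun x hx => by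
    have := hinc x hx
    have : 0 < 1 / r ^ 6 := by positivity
    linarith
  set T := ⌊D / (16 * q)⌋₊ + 1 with hT
  have hDq : 1 ≤ D / q := by rw [le_div_iff₀ hq']; linarith
  have hDq16 : D / (16 * q) = D / q / 16 := by field_simp
  have hTlo : D / (16 * q) ≤ T := by rw [hT]; push_cast; exact (Nat.lt_floor_add_one _).le
  have hThi : (T : ℝ) ≤ 2 * (D / q) := by
    have := Nat.floor_le (show 0 ≤ D / (16 * q) by positivity)
    rw [hT]; push_cast
    linarith
  have hw0 : 0 ≤ 3 * (r ^ 4 * σ ^ 2 / q) := by positivity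
  have h := differencing_small_denominator φ n q T a (s / r ^ 4) (3 * (r ^ 4 * σ ^ 2 / q)) hq
    (by omega) (by positivity) hw0 hmono hη ?_ ?_
  · set S := ‖∑ j ∈ range n, e (φ j)‖ with hS
    have hS0 : 0 ≤ S := norm_nonneg _
    have h1 : S ^ 2 * (D / (16 * q)) ≤ (4 * D) * (2 * D + 8 * (3 * (r ^ 4 * σ ^ 2 / q))) := by
      calc S ^ 2 * (D / (16 * q)) ≤ S ^ 2 * T := by gcongr
        _ ≤ _ := h
        _ ≤ _ := by
          gcongr
          have : (q : ℝ) * T ≤ q * (2 * (D / q)) := by gcongr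
          have h2 : (q : ℝ) * (2 * (D / q)) = 2 * D := by field_simp
          linarith
    have h2 : S ^ 2 ≤ 128 * (q * D) + 1536 * (r ^ 4 * σ ^ 2) := by
      have h3 : (4 * D) * (2 * D + 8 * (3 * (r ^ 4 * σ ^ 2 / q))) =
          (128 * (q * D) + 1536 * (r ^ 4 * σ ^ 2)) * (D / (16 * q)) := by field_simp; ring
      rw [h3] at h1
      exact le_of_mul_le_mul_right h1 (by positivity)
    have h4 : (q : ℝ) * D ≤ s * r ^ 3 := by
      calc (q : ℝ) * D ≤ r * D := by gcongr
        _ = _ := by rw [hD]; ring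
    have h5 : S ^ 2 ≤ (12 * √(s * r ^ 3) + 40 * r ^ 2 * σ) ^ 2 := by
      have h6 : √(s * r ^ 3) ^ 2 = s * r ^ 3 := Real.sq_sqrt (by positivity)
      have h7 : 0 ≤ √(s * r ^ 3) * (r ^ 2 * σ) := by positivity
      have h8 : (12 * √(s * r ^ 3) + 40 * r ^ 2 * σ) ^ 2 =
        144 * √(s * r ^ 3) ^ 2 + 960 * (√(s * r ^ 3) * (r ^ 2 * σ)) + 1600 * (r ^ 4 * σ ^ 2) := by
        ring
      have h9 : 0 ≤ r ^ 4 * σ ^ 2 := by positivity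
      have h10 : 0 ≤ s * r ^ 3 := by positivity
      rw [h8, h6]; linarith
    exact (abs_le.1 (abs_le_of_sq_le_sq h5 (by positivity))).2
  · intro t ht
    have ht' : (t : ℝ) ≤ D / (16 * q) := (Nat.le_floor_iff (by positivity)).1 (by omega)
    have h1 : q * t * (s / r ^ 4) ≤ q * (D / (16 * q)) * (s / r ^ 4) := by gcongr
    have h2 : q * (D / (16 * q)) * (s / r ^ 4) = s ^ 2 / r ^ 2 / 16 := by rw [hD]; field_simp
    have h3 : s ^ 2 / r ^ 2 ≤ 4 := by rw [div_le_iff₀ (by positivity)]; nlinarith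
    linarith
  · have h1 : (n : ℝ) * T * (2 / (q * (s / r ^ 4))) ^ 3 ≤
        (2 * D) * (2 * (D / q)) * (2 / (q * (s / r ^ 4))) ^ 3 := by gcongr
    have h2 : (2 * D) * (2 * (D / q)) * (2 / (q * (s / r ^ 4))) ^ 3 =
        32 * (r ^ 16 / (q ^ 4 * s)) := by rw [hD]; field_simp; norm_num
    have h3 : (3 * (r ^ 4 * σ ^ 2 / q)) ^ 4 = 81 * (r ^ 16 / (q ^ 4 * s)) := by
      have : σ ^ 8 = 1 / s := by field_simp; linarith
      calc _ = 81 * (r ^ 16 * σ ^ 8 / q ^ 4) := by ring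
        _ = _ := by rw [this]; field_simp
    rw [h3]
    have : 0 ≤ r ^ 16 / (q ^ 4 * s) := by positivity
    linarith

lemma secondDiff_shift (φ : ℕ → ℝ) (i x : ℕ) :
    secondDiff (fun j => φ (i + j)) x = secondDiff φ (i + x) := rfl

lemma geom_sum_eighth (σ : ℝ) (h0 : 0 < σ) (h : σ ^ 8 * 2 = 1) (K : ℕ) :
    ∑ k ∈ range K, σ ^ k ≤ 13 := by
  have h1 : σ ≤ 0.92 := by
    by_contra hcon
    push Not at hcon
    have : (0.92 : ℝ) ^ 8 ≤ σ ^ 8 := by gcongr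
    norm_num at this
    linarith
  have h2 := mul_neg_geom_sum σ K
  have h3 : 0 < σ ^ K := by positivity
  have h4 : 0 ≤ ∑ k ∈ range K, σ ^ k := sum_nonneg fun _ _ => by positivity
  nlinarith

lemma geom_sum_sqrt_two (K : ℕ) (B : ℝ) (hB : (2 : ℝ) ^ K ≤ B) :
    ∑ k ∈ range K, √((2 : ℝ) ^ k) ≤ 5 / 2 * √B := by
  have h0 : √(2 : ℝ) ^ 2 = 2 := Real.sq_sqrt (by norm_num)
  have h1 : 1.4 ≤ √(2 : ℝ) := Real.le_sqrt_of_sq_le (by norm_num)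
  have hk : ∀ k : ℕ, √((2 : ℝ) ^ k) = √2 ^ k := by
    intro k
    induction k with
    | zero => simp
    | succ k ih => rw [pow_succ, Real.sqrt_mul (by positivity), ih, pow_succ]
  have h2 := mul_geom_sum √2 K
  have h3 : √2 ^ K ≤ √B := by rw [← hk]; exact Real.sqrt_le_sqrt hB
  simp only [hk]
  have h4 : 0 ≤ ∑ k ∈ range K, √2 ^ k := sum_nonneg fun _ _ => by positivity
  nlinarith

/-- Small denominator, second differences close to `a / q`: a dyadic decomposition according to
the distance to `a / q`. -/
lemma small_denominator_near (φ : ℕ → ℝ) (N q : ℕ) (a : ℤ) (r : ℝ) (hr : 1 ≤ r) (hq : 0 < q)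
    (hqr : (q : ℝ) ≤ r)
    (hinc : ∀ x, x + 1 < N → secondDiff φ x + 1 / r ^ 6 ≤ secondDiff φ (x + 1))
    (hη : ∀ x < N, |secondDiff φ x - a / q| < 2 / r ^ 3) :
    ‖∑ j ∈ range N, e (φ j)‖ ≤ 1200 * r ^ 2 := by
  have hr0 : 0 < r := by linarith
  have hr2 : 1 ≤ r ^ 2 := one_le_pow₀ hr
  set θ : ℕ → ℝ := fun x => secondDiff φ x - a / q with hθ
  have hincθ : ∀ x, x + 1 < N → θ x + 1 / r ^ 6 ≤ θ (x + 1) := fun x hx => by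
    have := hinc x hx
    simp only [hθ]; linarith
  have hmono : ∀ x, x + 1 < N → θ x ≤ θ (x + 1) := fun x hx => by
    have := hincθ x hx
    have : 0 < 1 / r ^ 6 := by positivity
    linarith
  obtain ⟨K, hK1, hK2⟩ : ∃ K : ℕ, 2 * r ≤ 2 ^ K ∧ ∀ k < K, (2 : ℝ) ^ k ≤ 2 * r := by
    have hex : ∃ K : ℕ, 2 * r ≤ 2 ^ K := by
      obtain ⟨K, hK⟩ := pow_unbounded_of_one_lt (2 * r) (by norm_num : (1 : ℝ) < 2)
      exact ⟨K, hK.le⟩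
    classical
    exact ⟨Nat.find hex, Nat.find_spec hex, fun k hk => (lt_of_not_ge (Nat.find_min hex hk)).le⟩
  have hK3 : (2 : ℝ) ^ K ≤ 4 * r := by
    rcases Nat.eq_zero_or_pos K with h | h
    · rw [h]; norm_num; linarith
    · have := hK2 (K - 1) (by omega)
      have h2 : (2 : ℝ) ^ K = 2 * 2 ^ (K - 1) := by
        rw [← pow_succ']; congr 1; omega
      linarith
  choose p hpN hp1 hp2 using fun k : ℕ => exists_threshold θ N hmono ((2 : ℝ) ^ k / r ^ 4)
  choose m hmN hm1 hm2 using fun k : ℕ => exists_threshold θ N hmono (-((2 : ℝ) ^ k / r ^ 4))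
  have hκpos : ∀ k : ℕ, 0 < (2 : ℝ) ^ k / r ^ 4 := fun k => by positivity
  have hκsucc : ∀ k : ℕ, (2 : ℝ) ^ (k + 1) / r ^ 4 = 2 * (2 ^ k / r ^ 4) := fun k => by
    rw [pow_succ]; ring
  have hp_mono : ∀ k, p k ≤ p (k + 1) := by
    intro k
    by_contra hcon
    push Not at hcon
    have h1 := hp1 k _ hcon
    have h2 := hp2 (k + 1) _ le_rfl (hcon.trans_le (hpN k))
    rw [hκsucc] at h2
    linarith [hκpos k]
  have hm_anti : ∀ k, m (k + 1) ≤ m k := by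
    intro k
    by_contra hcon
    push Not at hcon
    have h1 := hm1 (k + 1) _ hcon
    have h2 := hm2 k _ le_rfl (hcon.trans_le (hmN (k + 1)))
    rw [hκsucc] at h1
    linarith [hκpos k]
  have hmp : m 0 ≤ p 0 := by
    by_contra hcon
    push Not at hcon
    have h1 := hm1 0 _ hcon
    have h2 := hp2 0 _ le_rfl (hcon.trans_le (hmN 0))
    linarith [hκpos 0]
  have hKr : 2 / r ^ 3 ≤ 2 ^ K / r ^ 4 := by
    rw [div_le_div_iff₀ (by positivity) (by positivity)]
    have : 2 * r * r ^ 3 ≤ 2 ^ K * r ^ 3 := by gcongr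
    linarith
  have hpK : p K = N := by
    by_contra hcon
    have hlt : p K < N := lt_of_le_of_ne (hpN K) hcon
    have h1 := hp2 K _ le_rfl hlt
    have h2 := (abs_lt.1 (hη _ hlt)).2
    simp only [hθ] at h1
    linarith
  have hmK : m K = 0 := by
    by_contra hcon
    have hlt : 0 < m K := Nat.pos_of_ne_zero hcon
    have h1 := hm1 K _ hlt
    have h2 := (abs_lt.1 (hη 0 (hlt.trans_le (hmN K)))).1
    simp only [hθ] at h1
    linarith
  -- `σ` is `2 ^ (-1 / 8)`
  obtain ⟨σ, hσ0, hσ⟩ : ∃ σ : ℝ, 0 < σ ∧ σ ^ 8 * 2 = 1 := by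
    refine ⟨(1 / 2 : ℝ) ^ ((8 : ℕ) : ℝ)⁻¹, by positivity, ?_⟩
    rw [Real.rpow_inv_natCast_pow (by norm_num) (by norm_num)]; norm_num
  set F : ℕ → ℂ := fun n => ∑ j ∈ range n, e (φ j) with hF
  have hFsub : ∀ i j, i ≤ j → F j - F i = ∑ x ∈ range (j - i), e (φ (i + x)) := by
    intro i j hij
    rw [← sum_Ico_shift (fun j => e (φ j)), sum_Ico_eq_sub _ hij]
  have hpiece : ∀ k < K, ∀ i j, i ≤ j → j ≤ N →
      ((∀ x, i ≤ x → x < j → (2 : ℝ) ^ k / r ^ 4 < θ x ∧ θ x ≤ 2 * (2 ^ k / r ^ 4)) ∨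
       (∀ x, i ≤ x → x < j → -(2 * ((2 : ℝ) ^ k / r ^ 4)) < θ x ∧ θ x ≤ -(2 ^ k / r ^ 4))) →
      ‖F j - F i‖ ≤ 12 * √(r ^ 3) * √((2 : ℝ) ^ k) + 40 * r ^ 2 * σ ^ k := by
    intro k hk i j hij hjN hside
    rw [hFsub i j hij]
    have h := small_denominator_piece (fun x => φ (i + x)) (j - i) q a r (2 ^ k) (σ ^ k) hr hq hqr
      (one_le_pow₀ (by norm_num)) (hK2 k hk) (by positivity)
      (by rw [← pow_mul, mul_comm k 8, pow_mul, ← mul_pow, hσ, one_pow])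
      (fun x hx => hinc (i + x) (by omega)) ?_
    · refine h.trans (le_of_eq ?_)
      rw [Real.sqrt_mul (by positivity)]; ring
    · rcases hside with hside | hside
      · left
        intro x hx
        have := hside (i + x) (by omega) (by omega)
        simp only [hθ] at this
        rw [secondDiff_shift]
        constructor <;> linarith
      · right
        intro x hx
        have := hside (i + x) (by omega) (by omega)
        simp only [hθ] at this
        rw [secondDiff_shift]
        constructor <;> linarith
  have htotal : ∑ k ∈ range K, (12 * √(r ^ 3) * √((2 : ℝ) ^ k) + 40 * r ^ 2 * σ ^ k) ≤
      580 * r ^ 2 := by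
    rw [sum_add_distrib, ← mul_sum, ← mul_sum]
    have h1 := geom_sum_sqrt_two K (4 * r) hK3
    have h2 := geom_sum_eighth σ hσ0 hσ K
    have h3 : √(r ^ 3) * √(4 * r) = 2 * r ^ 2 := by
      rw [← Real.sqrt_mul (by positivity), show r ^ 3 * (4 * r) = (2 * r ^ 2) ^ 2 by ring,
        Real.sqrt_sq (by positivity)]
    have h4 := mul_le_mul_of_nonneg_left h1 (show 0 ≤ 12 * √(r ^ 3) by positivity)
    have h5 := mul_le_mul_of_nonneg_left h2 (show 0 ≤ 40 * r ^ 2 by positivity)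
    have h6 : 12 * √(r ^ 3) * (5 / 2 * √(4 * r)) = 30 * (√(r ^ 3) * √(4 * r)) := by ring
    rw [h6, h3] at h4
    linarith
  have hright : ‖F (p K) - F (p 0)‖ ≤ 580 * r ^ 2 := by
    rw [← sum_range_sub (fun k => F (p k)) K]
    refine (norm_sum_le _ _).trans (le_trans (sum_le_sum fun k hk => ?_) htotal)
    rw [mem_range] at hk
    refine hpiece k hk _ _ (hp_mono k) (hpN _) (Or.inl fun x h1 h2 => ⟨?_, ?_⟩)
    · exact hp2 k x h1 (h2.trans_le (hpN _))
    · rw [← hκsucc]; exact hp1 (k + 1) x h2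
  have hleft : ‖F (m 0) - F (m K)‖ ≤ 580 * r ^ 2 := by
    rw [← norm_neg, neg_sub, ← sum_range_sub (fun k => F (m k)) K]
    refine (norm_sum_le _ _).trans (le_trans (sum_le_sum fun k hk => ?_) htotal)
    rw [mem_range] at hk
    rw [← norm_neg, neg_sub]
    refine hpiece k hk _ _ (hm_anti k) (hmN _) (Or.inr fun x h1 h2 => ⟨?_, ?_⟩)
    · rw [← hκsucc]; exact hm2 (k + 1) x h1 (h2.trans_le (hmN _))
    · exact hm1 k x h2
  have hmid : ‖F (p 0) - F (m 0)‖ ≤ 3 * r ^ 2 := by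
    rw [hFsub _ _ hmp]
    refine (norm_sum_e_le (fun x => φ (m 0 + x)) _).trans ?_
    rcases Nat.eq_zero_or_pos (p 0 - m 0) with h | h
    · rw [h]; simp; positivity
    · have hpN0 := hpN 0
      have h1 := le_of_increments θ N (1 / r ^ 6) hincθ (m 0) (p 0 - m 0 - 1) (by omega)
      have h2 := hp1 0 (m 0 + (p 0 - m 0 - 1)) (by omega)
      have h3 := hm2 0 (m 0) le_rfl (by omega)
      have h4 : ((p 0 - m 0 - 1 : ℕ) : ℝ) = ((p 0 - m 0 : ℕ) : ℝ) - 1 := by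
        rw [Nat.cast_sub h]; simp
      rw [h4] at h1
      rw [pow_zero] at h2 h3
      have h5 : (((p 0 - m 0 : ℕ) : ℝ) - 1) * (1 / r ^ 6) ≤ 2 * r ^ 2 * (1 / r ^ 6) := by
        have : 2 * r ^ 2 * (1 / r ^ 6) = 2 * (1 / r ^ 4) := by field_simp
        rw [this]; linarith
      have h6 := le_of_mul_le_mul_right h5 (by positivity)
      linarith
  have hdecomp : F N = (F (p K) - F (p 0)) + (F (p 0) - F (m 0)) + (F (m 0) - F (m K)) := by
    rw [hpK, hmK]; simp [hF]
  change ‖F N‖ ≤ _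
  rw [hdecomp]
  have t1 := norm_add_le ((F (p K) - F (p 0)) + (F (p 0) - F (m 0))) (F (m 0) - F (m K))
  have t2 := norm_add_le (F (p K) - F (p 0)) (F (p 0) - F (m 0))
  linarith

/-! ### The third-derivative test and the quintic sum -/

/-- Third-derivative test for short sums: if the third differences lie between `r ^ (-6)` and
`6 * r ^ (-6)` and the length is at most `r ^ 3 / 100`, the sum is at most
`1200 * r ^ 2`. -/
lemma third_test (φ : ℕ → ℝ) (N : ℕ) (r : ℝ) (hr : 1 ≤ r) (hN : (N : ℝ) ≤ r ^ 3 / 100)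
    (hinc : ∀ x, x + 1 < N → secondDiff φ x + 1 / r ^ 6 ≤ secondDiff φ (x + 1))
    (hinc' : ∀ x, x + 1 < N → secondDiff φ (x + 1) ≤ secondDiff φ x + 6 / r ^ 6) :
    ‖∑ j ∈ range N, e (φ j)‖ ≤ 1200 * r ^ 2 := by
  have hr0 : 0 < r := by linarith
  have hr2 : 1 ≤ r ^ 2 := one_le_pow₀ hr
  rcases Nat.eq_zero_or_pos N with rfl | hN0
  · simp; positivity
  have hmono : ∀ x, x + 1 < N → secondDiff φ x ≤ secondDiff φ (x + 1) := fun x hx => by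
    have := hinc x hx
    have : 0 < 1 / r ^ 6 := by positivity
    linarith
  have hge : ∀ x < N, secondDiff φ 0 ≤ secondDiff φ x := fun x hx => by
    have := le_of_increments (secondDiff φ) N 0 (fun j hj => by simpa using hmono j hj) 0 x
      (by omega)
    simpa using this
  have hle : ∀ x < N, secondDiff φ x ≤ secondDiff φ 0 + 1 / (16 * r ^ 3) := fun x hx => by
    have h1 := ge_of_increments (secondDiff φ) N (6 / r ^ 6) hinc' 0 x (by omega)
    have hxN : (x : ℝ) ≤ r ^ 3 / 100 := by
      have : (x : ℝ) ≤ N := by exact_mod_cast hx.le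
      linarith
    have h2 : (x : ℝ) * (6 / r ^ 6) ≤ r ^ 3 / 100 * (6 / r ^ 6) := by gcongr
    have h3 : r ^ 3 / 100 * (6 / r ^ 6) = 6 / 100 * (1 / r ^ 3) := by field_simp
    have h4 : 1 / (16 * r ^ 3) = 1 / 16 * (1 / r ^ 3) := by field_simp
    have h5 : 0 < 1 / r ^ 3 := by positivity
    rw [zero_add] at h1
    linarith
  have hV : ∀ x < N, ∀ x' < N, secondDiff φ x ≤ secondDiff φ x' + 1 / (16 * r ^ 3) :=
    fun x hx x' hx' => by linarith [hle x hx, hge x' hx']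
  have hN3 : (N : ℝ) ≤ r ^ 3 := by
    have : 0 < r ^ 3 := by positivity
    linarith
  obtain ⟨ρ, hρ1, hρ2⟩ := Real.exists_rat_abs_sub_le_and_den_le (secondDiff φ 0)
    (n := ⌊r ^ 2⌋₊) (Nat.floor_pos.2 hr2)
  set q := ρ.den with hq
  set a := ρ.num with ha
  have hq0 : 0 < q := ρ.den_pos
  have hq' : (0 : ℝ) < q := by exact_mod_cast hq0
  have hρ : (ρ : ℝ) = a / q := Rat.cast_def ρ
  rw [hρ] at hρ1
  have h0 : |secondDiff φ 0 - a / q| ≤ 1 / (q * r ^ 2) := by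
    refine hρ1.trans ?_
    rw [mul_comm]
    have := (Nat.lt_floor_add_one (r ^ 2)).le
    gcongr
  have hqr2 : (q : ℝ) ≤ r ^ 2 := (Nat.le_floor_iff (by positivity)).1 hρ2
  by_cases hqr : r ≤ q
  · have h := large_denominator φ N q a r hr hqr hqr2
      (Int.isCoprime_iff_gcd_eq_one.2 ρ.reduced) hN3 hinc hV h0
    linarith
  push Not at hqr
  have h16 : 1 / (16 * r ^ 3) = 1 / 16 * (1 / r ^ 3) := by field_simp
  have hr3 : 0 < 1 / r ^ 3 := by positivity
  by_cases hnear : |secondDiff φ 0 - a / q| ≤ 1 / r ^ 3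
  · refine small_denominator_near φ N q a r hr hq0 hqr.le hinc fun x hx => ?_
    have h1 := hle x hx
    have h2 := hge x hx
    have h3 := abs_le.1 hnear
    have h4 : 2 / r ^ 3 = 2 * (1 / r ^ 3) := by ring
    rw [h16] at h1
    rw [abs_lt, h4]
    constructor <;> linarith
  · push Not at hnear
    have h := small_denominator_far φ N q a r (15 / 16 * |secondDiff φ 0 - a / q|) hr hq0 hN3
      (by gcongr) (by linarith [abs_nonneg (secondDiff φ 0 - a / q)]) hmono ?_
    · linarith
    · rcases abs_cases (secondDiff φ 0 - a / q) with ⟨h, _⟩ | ⟨h, _⟩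
      · left
        intro x hx
        have h1 := hle x hx
        have h2 := hge x hx
        rw [h] at hnear ⊢
        rw [h16] at h1
        constructor <;> linarith
      · right
        intro x hx
        have h1 := hle x hx
        have h2 := hge x hx
        rw [h] at hnear ⊢
        rw [h16] at h1
        constructor <;> linarith

/-- The phase of the exponential sum. -/
noncomputable def quinticPhase (α₁ α₂ α₃ x : ℝ) : ℝ := α₁ * x + α₂ * x ^ 3 + α₃ * x ^ 5

set_option maxHeartbeats 400000 in
/-- Sum over one block `M < x ≤ n` with `n ≤ 2 * M + 1`; here `a` is the fifth root of the
leading coefficient. -/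
lemma block_bound (α₁ α₂ a : ℝ) (ha : 0 < a) (n M : ℕ) (hMn : M ≤ n) (hnM : n ≤ 2 * M + 1)
    (han : 1 ≤ a * n) (ha3 : a ^ 3 * (n : ℝ) ^ 2 ≤ 1) :
    ‖∑ j ∈ range (n - M), e (quinticPhase α₁ α₂ (a ^ 5) ((M + 1 + j : ℕ) : ℝ))‖ ≤
      2100 * √(n / a) := by
  have hn0 : 0 < n := by
    rcases Nat.eq_zero_or_pos n with rfl | h
    · norm_num at han
    · exact h
  have hn1 : (1 : ℝ) ≤ n := by exact_mod_cast hn0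
  have hn' : (0 : ℝ) < n := by linarith
  set U : ℝ := 1 / (10 ^ 6 * (a ^ 2 * n)) with hU
  have hU0 : 0 < U := by positivity
  set T := ⌊U⌋₊ + 1 with hT
  have hTlo : U ≤ T := by rw [hT]; push_cast; exact (Nat.lt_floor_add_one _).le
  have hT0 : (0 : ℝ) < T := by linarith
  have hUn : U ≤ n := by
    rw [hU, div_le_iff₀ (by positivity)]
    nlinarith
  have hThi : (T : ℝ) ≤ 2 * n := by
    rw [hT]; push_cast
    linarith [Nat.floor_le hU0.le]
  set ψ : ℕ → ℝ := fun j => quinticPhase α₁ α₂ (a ^ 5) ((M + 1 + j : ℕ) : ℝ) with hψ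
  have hcorr : ∀ u ∈ Ico 1 T, ‖∑ j ∈ range (n - M - 1 * u), e (ψ (j + 1 * u) - ψ j)‖ ≤
      1200 * (a ^ 5 * n) ^ (-(1 / 3) : ℝ) * (u : ℝ) ^ (-(1 / 3) : ℝ) := by
    intro u hu
    rw [mem_Ico] at hu
    have hu1 : (1 : ℝ) ≤ u := by exact_mod_cast hu.1
    have huU : (u : ℝ) ≤ U := (Nat.le_floor_iff hU0.le).1 (by omega)
    rw [one_mul]
    set τ : ℝ := 60 * (u * (a ^ 5 * n)) with hτ
    have hτ0 : 0 < τ := by positivity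
    have hτn : 10 ^ 4 * (n : ℝ) ^ 2 * τ ≤ 1 := by
      have h1 : (u : ℝ) * (a ^ 5 * n) ≤ U * (a ^ 5 * n) := by gcongr
      have h2 : U * (a ^ 5 * n) = a ^ 3 / 10 ^ 6 := by rw [hU]; field_simp
      rw [h2] at h1
      calc 10 ^ 4 * (n : ℝ) ^ 2 * τ = 60 * 10 ^ 4 * (n : ℝ) ^ 2 * (u * (a ^ 5 * n)) := by
            rw [hτ]; ring
        _ ≤ 60 * 10 ^ 4 * (n : ℝ) ^ 2 * (a ^ 3 / 10 ^ 6) := by gcongr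
        _ = 6 / 10 * (a ^ 3 * (n : ℝ) ^ 2) := by ring
        _ ≤ 1 := by linarith
    -- the parameter of the third-derivative test: `r ^ (-6) = τ`
    set r : ℝ := τ ^ (-(1 / 6) : ℝ) with hrdef
    have hr0 : 0 < r := by positivity
    have hr6 : r ^ 6 = 1 / τ := by
      rw [hrdef, ← Real.rpow_natCast, ← Real.rpow_mul hτ0.le]
      norm_num [Real.rpow_neg_one]
    have hr2 : r ^ 2 = τ ^ (-(1 / 3) : ℝ) := by
      rw [hrdef, ← Real.rpow_natCast, ← Real.rpow_mul hτ0.le]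
      norm_num
    have hn2 : (1 : ℝ) ≤ (n : ℝ) ^ 2 := one_le_pow₀ hn1
    have hr1 : 1 ≤ r := by
      apply Real.one_le_rpow_of_pos_of_le_one_of_nonpos hτ0 _ (by norm_num)
      nlinarith
    have hnr : (n : ℝ) ≤ r ^ 3 / 100 := by
      have h1 : (100 * (n : ℝ)) ^ 2 ≤ (r ^ 3) ^ 2 := by
        rw [← pow_mul, hr6, le_div_iff₀ hτ0]; linarith
      have h2 := (abs_le.1 (abs_le_of_sq_le_sq h1 (by positivity))).2
      linarith
    have hdiff : ∀ j, secondDiff (fun j => ψ (j + u) - ψ j) (j + 1) -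
        secondDiff (fun j => ψ (j + u) - ψ j) j =
        60 * (u * a ^ 5) * (2 * (M + 1 + j) + u + 3) := by
      intro j
      simp only [secondDiff, hψ, quinticPhase]
      push_cast
      ring
    have h := third_test (fun j => ψ (j + u) - ψ j) (n - M - u) r hr1 ?_ ?_ ?_
    · refine h.trans ?_
      rw [hr2, mul_assoc, ← Real.mul_rpow (by positivity) (by positivity)]
      have h1 : τ ^ (-(1 / 3) : ℝ) ≤ (a ^ 5 * n * u) ^ (-(1 / 3) : ℝ) := by
        apply Real.rpow_le_rpow_of_nonpos (by positivity) _ (by norm_num)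
        have : 0 < a ^ 5 * n * u := by positivity
        rw [hτ]; linarith
      linarith
    · refine le_trans ?_ hnr
      exact_mod_cast (show n - M - u ≤ n by omega)
    · intro j hj
      have h1 := hdiff j
      rw [hr6, one_div_one_div]
      have h2 : (n : ℝ) ≤ 2 * (M + 1 + j) + u + 3 := by
        exact_mod_cast (show n ≤ 2 * (M + 1 + j) + u + 3 by omega)
      have h3 : 60 * (u * a ^ 5) * n ≤ 60 * (u * a ^ 5) * (2 * (M + 1 + j) + u + 3) := by gcongr
      rw [hτ]; linarith
    · intro j hj
      have h1 := hdiff j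
      rw [hr6, div_div_eq_mul_div, div_one]
      have h2 : 2 * ((M : ℝ) + 1 + j) + u + 3 ≤ 6 * n := by
        exact_mod_cast (show 2 * (M + 1 + j) + u + 3 ≤ 6 * n by omega)
      have h3 : 60 * (u * a ^ 5) * (2 * (M + 1 + j) + u + 3) ≤ 60 * (u * a ^ 5) * (6 * n) := by
        gcongr
      rw [hτ]; linarith
  set P : ℝ := (a ^ 5 * n) ^ (-(1 / 3) : ℝ) with hP
  have hP0 : 0 < P := by positivity
  have hPT : P * (T : ℝ) ^ (-(1 / 3) : ℝ) ≤ 100 / a := by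
    have h1 : (T : ℝ) ^ (-(1 / 3) : ℝ) ≤ U ^ (-(1 / 3) : ℝ) :=
      Real.rpow_le_rpow_of_nonpos hU0 hTlo (by norm_num)
    have h2 : P * U ^ (-(1 / 3) : ℝ) = 100 / a := by
      rw [hP, ← Real.mul_rpow (by positivity) (by positivity)]
      have : a ^ 5 * n * U = (a / 100) ^ 3 := by rw [hU]; field_simp; norm_num
      rw [this, ← Real.rpow_natCast, ← Real.rpow_mul (by positivity)]
      norm_num [Real.rpow_neg_one]
    calc _ ≤ P * U ^ (-(1 / 3) : ℝ) := by gcongr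
      _ = _ := h2
  have hsum : ∑ u ∈ Ico 1 T, ‖∑ j ∈ range (n - M - 1 * u), e (ψ (j + 1 * u) - ψ j)‖ ≤
      180000 * (T / a) := by
    refine (sum_le_sum hcorr).trans ?_
    rw [← mul_sum]
    have h := sum_Ico_rpow_neg_le (1 / 3) (by norm_num) (by norm_num) T
    have hT23 : (T : ℝ) ^ (1 - 1 / 3 : ℝ) = T * (T : ℝ) ^ (-(1 / 3) : ℝ) := by
      rw [sub_eq_add_neg, Real.rpow_add hT0, Real.rpow_one]
    rw [hT23] at h
    calc _ ≤ 1200 * P * (T * (T : ℝ) ^ (-(1 / 3) : ℝ) / (1 - 1 / 3)) := by gcongr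
      _ = 1800 * T * (P * (T : ℝ) ^ (-(1 / 3) : ℝ)) := by ring
      _ ≤ 1800 * T * (100 / a) := by gcongr
      _ = _ := by ring
  have hvdc := van_der_corput_phase ψ (n - M) 1 T (by omega)
  set S := ‖∑ j ∈ range (n - M), e (ψ j)‖ with hS
  have hLn : ((n - M : ℕ) : ℝ) ≤ n := by exact_mod_cast Nat.sub_le n M
  have hnT : (n : ℝ) ≤ 10 ^ 6 * (T / a) := by
    have h1 : 10 ^ 6 * (U / a) ≤ 10 ^ 6 * (T / a) := by gcongr
    have h2 : 10 ^ 6 * (U / a) = 1 / (a ^ 3 * n) := by rw [hU]; field_simp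
    have h3 : (n : ℝ) ≤ 1 / (a ^ 3 * n) := by
      rw [le_div_iff₀ (by positivity)]; linarith
    linarith
  have h1 : S ^ 2 * T ≤ (3 * n) * (1360000 * (T / a)) := by
    refine hvdc.trans (mul_le_mul ?_ ?_ ?_ (by positivity))
    · push_cast; linarith
    · linarith
    · exact add_nonneg (Nat.cast_nonneg _)
        (mul_nonneg (by norm_num) (sum_nonneg fun _ _ => norm_nonneg _))
  have h2 : S ^ 2 ≤ (2100 * √(n / a)) ^ 2 := by
    rw [mul_pow, Real.sq_sqrt (by positivity)]
    have h3 : (3 * n) * (1360000 * (T / a)) = 4080000 * (n / a) * T := by ring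
    rw [h3] at h1
    have h4 := le_of_mul_le_mul_right h1 hT0
    have h5 : 0 ≤ n / a := by positivity
    linarith
  exact (abs_le.1 (abs_le_of_sq_le_sq h2 (by positivity))).2

/-- Sum over `1 ≤ x ≤ n`, by halving `n` until `a * n ≤ 1`. -/
lemma initial_segment_bound (α₁ α₂ a : ℝ) (ha : 0 < a) (n : ℕ)
    (ha3 : a ^ 3 * (n : ℝ) ^ 2 ≤ 1) :
    ‖∑ j ∈ range n, e (quinticPhase α₁ α₂ (a ^ 5) ((1 + j : ℕ) : ℝ))‖ ≤ 7500 * √(n / a) := by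
  induction n using Nat.strong_induction_on with
  | _ n ih =>
    by_cases han : a * n ≤ 1
    · refine (norm_sum_e_le
        (fun j => quinticPhase α₁ α₂ (a ^ 5) ((1 + j : ℕ) : ℝ)) n).trans ?_
      have h1 : (n : ℝ) ≤ √(n / a) := by
        apply Real.le_sqrt_of_sq_le
        rw [le_div_iff₀ ha]
        nlinarith [Nat.cast_nonneg (α := ℝ) n]
      linarith [Real.sqrt_nonneg ((n : ℝ) / a)]
    push Not at han
    have hn0 : 0 < n := by
      rcases Nat.eq_zero_or_pos n with rfl | h
      · norm_num at han
      · exact h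
    have hMle : ((n / 2 : ℕ) : ℝ) ≤ n / 2 := by
      have := Nat.cast_div_le (α := ℝ) (m := n) (n := 2)
      simpa using this
    have hn' : (0 : ℝ) < n := by exact_mod_cast hn0
    have hM0 : (0 : ℝ) ≤ ((n / 2 : ℕ) : ℝ) := Nat.cast_nonneg _
    have hrec := ih (n / 2) (by omega) (by
      refine le_trans ?_ ha3
      gcongr
      omega)
    have hblock := block_bound α₁ α₂ a ha n (n / 2) (by omega) (by omega) han.le ha3
    have hsplit : ∑ j ∈ range n, e (quinticPhase α₁ α₂ (a ^ 5) ((1 + j : ℕ) : ℝ)) =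
        ∑ j ∈ range (n / 2), e (quinticPhase α₁ α₂ (a ^ 5) ((1 + j : ℕ) : ℝ)) +
        ∑ j ∈ range (n - n / 2), e (quinticPhase α₁ α₂ (a ^ 5) ((n / 2 + 1 + j : ℕ) : ℝ)) := by
      conv_lhs => rw [show n = n / 2 + (n - n / 2) by omega, sum_range_add]
      congr 1
      refine sum_congr rfl fun j _ => ?_
      rw [show 1 + (n / 2 + j) = n / 2 + 1 + j by ring]
    rw [hsplit]
    refine (norm_add_le _ _).trans ?_
    have hhalf : √(((n / 2 : ℕ) : ℝ) / a) ≤ 0.71 * √(n / a) := by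
      have h1 : (0.71 : ℝ) * √(n / a) = √(0.71 ^ 2 * (n / a)) := by
        rw [Real.sqrt_mul (by norm_num), Real.sqrt_sq (by norm_num)]
      rw [h1]
      apply Real.sqrt_le_sqrt
      have h2 : ((n / 2 : ℕ) : ℝ) / a ≤ n / 2 / a := by gcongr
      have h3 : (n : ℝ) / 2 / a = 1 / 2 * (n / a) := by ring
      have h4 : 0 ≤ (n : ℝ) / a := by positivity
      linarith
    have h5 : 0 ≤ √((n : ℝ) / a) := Real.sqrt_nonneg _
    linarith

lemma sum_Icc_symm (g : ℤ → ℂ) (n : ℕ) :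
    ∑ x ∈ Icc (-(n : ℤ)) n, g x =
      g 0 + (∑ j ∈ range n, g ((1 + j : ℕ) : ℤ) + ∑ j ∈ range n, g (-((1 + j : ℕ) : ℤ))) := by
  induction n with
  | zero => simp
  | succ n ih =>
    have : Icc (-((n + 1 : ℕ) : ℤ)) ((n + 1 : ℕ) : ℤ) =
        insert (-((n + 1 : ℕ) : ℤ)) (insert ((n + 1 : ℕ) : ℤ) (Icc (-(n : ℤ)) n)) := by
      ext x
      simp only [mem_insert, mem_Icc]
      push_cast
      omega
    rw [this, sum_insert, sum_insert, ih, sum_range_succ, sum_range_succ, add_comm 1 n]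
    · ring
    · simp only [mem_Icc]; push_cast; omega
    · simp only [mem_insert, mem_Icc]; push_cast; omega

/-- The theorem for non-negative leading coefficient. The sum is trivially small enough when
`X ^ 5 * α₃ ≤ 1`. -/
lemma bound_of_nonneg (X α₁ α₂ α₃ : ℝ) (hX : 1 ≤ X) (hα0 : 0 ≤ α₃)
    (hα : α₃ ≤ X ^ (-(10 : ℝ) / 3)) :
    ‖∑ x ∈ Icc (-⌊X⌋) ⌊X⌋, e (quinticPhase α₁ α₂ α₃ (x : ℝ))‖ ≤
      30002 * X / (1 + X ^ 5 * α₃) ^ ((1 : ℝ) / 10) := by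
  have hX0 : 0 < X := by linarith
  set n := ⌊X⌋₊ with hn
  have hfl : ⌊X⌋ = (n : ℤ) := (Int.natCast_floor_eq_floor hX0.le).symm
  have hnX : (n : ℝ) ≤ X := Nat.floor_le hX0.le
  rw [hfl]
  have hP0 : 0 ≤ X ^ 5 * α₃ := by positivity
  rw [le_div_iff₀ (by positivity)]
  by_cases hP : X ^ 5 * α₃ ≤ 1
  · have h1 : ‖∑ x ∈ Icc (-(n : ℤ)) n, e (quinticPhase α₁ α₂ α₃ (x : ℝ))‖ ≤ 3 * X := by
      refine (norm_sum_le _ _).trans ?_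
      simp only [norm_e, sum_const, Int.card_Icc, nsmul_eq_mul, mul_one]
      have : ((n : ℤ) + 1 - -(n : ℤ)).toNat = 2 * n + 1 := by omega
      rw [this]; push_cast; linarith
    have h2 : (1 + X ^ 5 * α₃) ^ ((1 : ℝ) / 10) ≤ 2 := by
      calc _ ≤ (2 : ℝ) ^ ((1 : ℝ) / 10) := by gcongr; linarith
        _ ≤ (2 : ℝ) ^ (1 : ℝ) := Real.rpow_le_rpow_of_exponent_le (by norm_num) (by norm_num)
        _ = 2 := Real.rpow_one 2
    calc _ ≤ 3 * X * 2 := by gcongr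
      _ ≤ _ := by linarith
  push Not at hP
  have hαpos : 0 < α₃ := by
    rcases hα0.lt_or_eq with h | h
    · exact h
    · rw [← h] at hP; norm_num at hP
  obtain ⟨a, ha, haα⟩ : ∃ a : ℝ, 0 < a ∧ a ^ 5 = α₃ := by
    refine ⟨α₃ ^ ((5 : ℕ) : ℝ)⁻¹, by positivity, ?_⟩
    exact Real.rpow_inv_natCast_pow hα0 (by norm_num)
  have ha3 : a ^ 3 * X ^ 2 ≤ 1 := by
    have h1 : (a ^ 3 * X ^ 2) ^ 5 ≤ 1 ^ 5 := by
      have h2 : (a ^ 3 * X ^ 2) ^ 5 = α₃ ^ 3 * X ^ 10 := by rw [← haα]; ring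
      have h3 : (X ^ (-(10 : ℝ) / 3)) ^ 3 * X ^ 10 = 1 := by
        rw [← Real.rpow_natCast, ← Real.rpow_mul hX0.le, ← Real.rpow_natCast X 10,
          ← Real.rpow_add hX0]
        norm_num
      rw [h2, one_pow, ← h3]
      gcongr
    exact le_of_pow_le_pow_left₀ (by norm_num) (by norm_num) h1
  have hseg : ∀ β₁ β₂ : ℝ,
      ‖∑ j ∈ range n, e (quinticPhase β₁ β₂ α₃ ((1 + j : ℕ) : ℝ))‖ ≤ 7500 * √(X / a) := by
    intro β₁ β₂
    rw [← haα]
    refine (initial_segment_bound β₁ β₂ a ha n ?_).trans ?_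
    · refine le_trans ?_ ha3
      gcongr
    · gcongr
  have hneg : ∑ j ∈ range n, e (quinticPhase α₁ α₂ α₃ ((-((1 + j : ℕ) : ℤ) : ℤ) : ℝ)) =
      (starRingEnd ℂ) (∑ j ∈ range n, e (quinticPhase α₁ α₂ α₃ ((1 + j : ℕ) : ℝ))) := by
    rw [map_sum]
    refine sum_congr rfl fun j _ => ?_
    rw [conj_e]
    congr 1
    simp only [quinticPhase]
    push_cast; ring
  have ha1 : a ≤ X := by
    by_contra hcon
    push Not at hcon
    have h1 : 1 < a := by linarith
    have h2 : 1 < a ^ 3 := one_lt_pow₀ h1 (by norm_num)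
    have h3 : 1 ≤ X ^ 2 := one_le_pow₀ hX
    nlinarith
  have hone : 1 ≤ √(X / a) := Real.one_le_sqrt.2 (by rw [le_div_iff₀ ha]; linarith)
  have hsum : ‖∑ x ∈ Icc (-(n : ℤ)) n, e (quinticPhase α₁ α₂ α₃ (x : ℝ))‖ ≤
      15001 * √(X / a) := by
    set A := ∑ j ∈ range n, e (quinticPhase α₁ α₂ α₃ ((1 + j : ℕ) : ℝ)) with hA
    have hdecomp : ∑ x ∈ Icc (-(n : ℤ)) n, e (quinticPhase α₁ α₂ α₃ (x : ℝ)) =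
        e (quinticPhase α₁ α₂ α₃ ((0 : ℤ) : ℝ)) + (A + (starRingEnd ℂ) A) := by
      rw [sum_Icc_symm (fun x => e (quinticPhase α₁ α₂ α₃ (x : ℝ))), hneg]
      rfl
    have h1 : ‖A‖ ≤ 7500 * √(X / a) := hseg α₁ α₂
    have t1 := norm_add_le (e (quinticPhase α₁ α₂ α₃ ((0 : ℤ) : ℝ))) (A + (starRingEnd ℂ) A)
    have t2 := norm_add_le A ((starRingEnd ℂ) A)
    rw [norm_e] at t1
    rw [Complex.norm_conj] at t2
    rw [hdecomp]
    calc _ ≤ 1 + ‖A + (starRingEnd ℂ) A‖ := t1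
      _ ≤ 1 + (‖A‖ + ‖A‖) := by gcongr
      _ ≤ 1 + (7500 * √(X / a) + 7500 * √(X / a)) := by gcongr
      _ ≤ _ := by linarith
  have hden : (1 + X ^ 5 * α₃) ^ ((1 : ℝ) / 10) ≤ 2 * √(a * X) := by
    calc _ ≤ (2 * (X ^ 5 * α₃)) ^ ((1 : ℝ) / 10) := by gcongr; linarith
      _ = (2 : ℝ) ^ ((1 : ℝ) / 10) * √(a * X) := by
        rw [Real.mul_rpow (by norm_num) hP0, ← haα, show X ^ 5 * a ^ 5 = (a * X) ^ 5 by ring,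
          ← Real.rpow_natCast, ← Real.rpow_mul (by positivity), Real.sqrt_eq_rpow]
        norm_num
      _ ≤ (2 : ℝ) ^ (1 : ℝ) * √(a * X) := by
        gcongr
        · norm_num
        · norm_num
      _ = _ := by rw [Real.rpow_one]
  calc _ ≤ 15001 * √(X / a) * (2 * √(a * X)) := by gcongr
    _ = 30002 * (√(X / a) * √(a * X)) := by ring
    _ = 30002 * X := by
      rw [← Real.sqrt_mul (by positivity), show X / a * (a * X) = X ^ 2 by field_simp,
        Real.sqrt_sq hX0.le]

theorem stmt13 :
    ∃ C : ℝ, ∀ X : ℝ, 1 ≤ X → ∀ α₁ α₂ α₃ : ℝ, |α₃| ≤ X ^ (-(10 : ℝ) / 3) →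
      ‖∑ x ∈ Finset.Icc (-⌊X⌋) ⌊X⌋,
          e (α₁ * (x : ℝ) + α₂ * (x : ℝ) ^ 3 + α₃ * (x : ℝ) ^ 5)‖ ≤
        C * X / (1 + X ^ 5 * |α₃|) ^ ((1 : ℝ) / 10) := by
  refine ⟨30002, fun X hX α₁ α₂ α₃ hα => ?_⟩
  rcases le_total 0 α₃ with h | h
  · rw [abs_of_nonneg h] at hα ⊢
    exact bound_of_nonneg X α₁ α₂ α₃ hX h hα
  · rw [abs_of_nonpos h] at hα ⊢
    have hb := bound_of_nonneg X (-α₁) (-α₂) (-α₃) hX (by linarith) hα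
    rw [← Complex.norm_conj, map_sum]
    refine le_trans (le_of_eq ?_) hb
    congr 1
    refine sum_congr rfl fun x _ => ?_
    rw [conj_e]
    congr 1
    simp only [quinticPhase]
    ring
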